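/- arXiv:math/9909053 — 5 statements merged into one kernel-verified Lean document; each statement's English description precedes it below -/
import Mathlib

section
/- Let q, a, B be nonzero complex numbers such that q^m ≠ 1 for all m ≥ 1, a q^m ≠ 1 and a^2 q^{2m} ≠ 1 for all m ≥ 1, and B q^j ≠ 1 and a q^{j+1} ≠ -B for all j ≥ 0 (so that all denominators below are nonzero). Suppose (α_n, β_n) is a Bailey pair with parameters (a^2, q^2). Define α'_r = ((-B;q)_r / (-aq/B;q)_r) · B^{-r} q^{-r(r-1)/2} · α_r and β'_n = ∑_{k=0}^{n} [(-aq;q)_{2k} (B^2;q^2)_k (q^{-k}/B;q)_{n-k} (Bq^{k+1};q)_{n-k} / ((-aq/B;q)_n (B;q)_n (q^2;q^2)_{n-k})] · B^{-k} q^{-k(k-1)/2} · β_k. Then (α'_n, β'_n) is a Bailey pair with parameters (a, q). -/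
/-- The finite q-Pochhammer symbol `(x;q)_n = ∏_{j=0}^{n-1} (1 - x q^j)`. -/
noncomputable def qPoch (x q : ℂ) (n : ℕ) : ℂ := ∏ j ∈ Finset.range n, (1 - x * q ^ j)

/-- `(α, β)` is a Bailey pair with parameters `(a, q)`. -/
def IsBaileyPair (a q : ℂ) (α β : ℕ → ℂ) : Prop :=
  ∀ n : ℕ, β n = ∑ r ∈ Finset.range (n + 1), α r / (qPoch q q (n - r) * qPoch (a * q) q (n + r))


lemma qPoch_zero (x q : ℂ) : qPoch x q 0 = 1 := by simp [qPoch]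

lemma qPoch_succ (x q : ℂ) (n : ℕ) : qPoch x q (n + 1) = qPoch x q n * (1 - x * q ^ n) := by
  simp [qPoch, Finset.prod_range_succ]

lemma qPoch_succ' (x q : ℂ) (n : ℕ) : qPoch x q (n + 1) = (1 - x) * qPoch (x * q) q n := by
  simp only [qPoch, Finset.prod_range_succ']
  rw [mul_comm]
  congr 1
  · simp
  · apply Finset.prod_congr rfl
    intro i _
    ring

lemma qPoch_add (x q : ℂ) (m n : ℕ) :
    qPoch x q (m + n) = qPoch x q m * qPoch (x * q ^ m) q n := by
  simp only [qPoch, Finset.prod_range_add]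
  congr 1
  apply Finset.prod_congr rfl
  intro i _
  ring

lemma qPoch_sq (x q : ℂ) (n : ℕ) :
    qPoch (x ^ 2) (q ^ 2) n = qPoch x q n * qPoch (-x) q n := by
  simp only [qPoch, ← Finset.prod_mul_distrib]
  apply Finset.prod_congr rfl
  intro i _
  ring

lemma qPoch_ne_zero (x q : ℂ) (n : ℕ) (h : ∀ j, x * q ^ j ≠ 1) : qPoch x q n ≠ 0 := by
  rw [qPoch, Finset.prod_ne_zero_iff]
  intro i _ h0
  exact h i (sub_eq_zero.mp h0).symm

/-- Gaussian binomial coefficient in base `p`, given by the quotient formula. -/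
noncomputable def gb (p : ℂ) (N j : ℕ) : ℂ :=
  if j ≤ N then qPoch p p N / (qPoch p p j * qPoch p p (N - j)) else 0


lemma pp_ne (p : ℂ) (hp : ∀ m : ℕ, 1 ≤ m → p ^ m ≠ 1)
    (n : ℕ) : qPoch p p n ≠ 0 := by
  apply qPoch_ne_zero
  intro j
  rw [← pow_succ']
  exact hp _ (by omega)

lemma gb_zero (p : ℂ) (hp : ∀ m : ℕ, 1 ≤ m → p ^ m ≠ 1)
    (N : ℕ) : gb p N 0 = 1 := by
  have := pp_ne p hp N
  simp [gb, qPoch_zero, this]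

lemma gb_pascal1 (p : ℂ) (hp : ∀ m : ℕ, 1 ≤ m → p ^ m ≠ 1)
    (N j : ℕ) (hj : j ≤ N) :
    gb p (N + 1) (j + 1) = gb p N (j + 1) + p ^ (N - j) * gb p N j := by
  obtain ⟨d, rfl⟩ := Nat.exists_eq_add_of_le hj
  have e1 : j + d + 1 - (j + 1) = d := by omega
  have e2 : j + d - j = d := by omega
  have h1 := pp_ne p hp j
  have h2 := pp_ne p hp d
  have h3 : 1 - p * p ^ j ≠ 0 := by
    rw [← pow_succ']; exact sub_ne_zero.mpr (hp _ (by omega)).symm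
  rcases d with _ | d
  · have h4 := pp_ne p hp (j+1)
    simp [gb, qPoch_zero, h1, h4]
  · have e3 : j + (d + 1) - (j + 1) = d := by omega
    have h4 := pp_ne p hp d
    have h5 : 1 - p * p ^ d ≠ 0 := by
      rw [← pow_succ']; exact sub_ne_zero.mpr (hp _ (by omega)).symm
    rw [gb, gb, gb, if_pos (by omega), if_pos (by omega), if_pos (by omega), e1, e2, e3,
      qPoch_succ p p (j + (d + 1)), qPoch_succ p p j, qPoch_succ p p d]
    field_simp
    ring

lemma gb_pascal2 (p : ℂ) (hp : ∀ m : ℕ, 1 ≤ m → p ^ m ≠ 1)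
    (N j : ℕ) (hj : j ≤ N) :
    gb p (N + 1) (j + 1) = p ^ (j + 1) * gb p N (j + 1) + gb p N j := by
  obtain ⟨d, rfl⟩ := Nat.exists_eq_add_of_le hj
  have e1 : j + d + 1 - (j + 1) = d := by omega
  have e2 : j + d - j = d := by omega
  have h1 := pp_ne p hp j
  have h2 := pp_ne p hp d
  have h3 : 1 - p * p ^ j ≠ 0 := by
    rw [← pow_succ']; exact sub_ne_zero.mpr (hp _ (by omega)).symm
  rcases d with _ | d
  · have h4 := pp_ne p hp (j+1)
    simp [gb, qPoch_zero, h1, h4]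
  · have e3 : j + (d + 1) - (j + 1) = d := by omega
    have h4 := pp_ne p hp d
    have h5 : 1 - p * p ^ d ≠ 0 := by
      rw [← pow_succ']; exact sub_ne_zero.mpr (hp _ (by omega)).symm
    rw [gb, gb, gb, if_pos (by omega), if_pos (by omega), if_pos (by omega), e1, e2, e3,
      qPoch_succ p p (j + (d + 1)), qPoch_succ p p j, qPoch_succ p p d]
    field_simp
    ring

lemma gb_sum1 (p : ℂ) (hp : ∀ m : ℕ, 1 ≤ m → p ^ m ≠ 1)
    (N : ℕ) (f : ℕ → ℂ) :
    ∑ j ∈ Finset.range (N + 2), gb p (N + 1) j * f j =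
      ∑ j ∈ Finset.range (N + 1), gb p N j * f j +
      ∑ j ∈ Finset.range (N + 1), p ^ (N - j) * gb p N j * f (j + 1) := by
  have h0 : ∑ j ∈ Finset.range (N + 1), gb p N j * f j
      = ∑ j ∈ Finset.range (N + 2), gb p N j * f j := by
    rw [Finset.sum_range_succ _ (N + 1)]
    simp [gb]
  rw [h0, Finset.sum_range_succ' _ (N + 1), Finset.sum_range_succ' _ (N + 1), gb_zero p hp,
    gb_zero p hp, add_right_comm, ← Finset.sum_add_distrib]
  congr 1
  apply Finset.sum_congr rfl
  intro j hj
  rw [gb_pascal1 p hp N j (by simp at hj; omega)]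
  ring

lemma gb_sum2 (p : ℂ) (hp : ∀ m : ℕ, 1 ≤ m → p ^ m ≠ 1)
    (N : ℕ) (f : ℕ → ℂ) :
    ∑ j ∈ Finset.range (N + 2), gb p (N + 1) j * f j =
      ∑ j ∈ Finset.range (N + 1), p ^ j * gb p N j * f j +
      ∑ j ∈ Finset.range (N + 1), gb p N j * f (j + 1) := by
  have h0 : ∑ j ∈ Finset.range (N + 1), p ^ j * gb p N j * f j
      = ∑ j ∈ Finset.range (N + 2), p ^ j * gb p N j * f j := by
    rw [Finset.sum_range_succ _ (N + 1)]
    simp [gb]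
  rw [h0, Finset.sum_range_succ' _ (N + 1), Finset.sum_range_succ' _ (N + 1), gb_zero p hp,
    gb_zero p hp, add_right_comm, ← Finset.sum_add_distrib]
  congr 1
  · apply Finset.sum_congr rfl
    intro j hj
    rw [gb_pascal2 p hp N j (by simp at hj; omega)]
    ring
  · simp

/-- The summand of the key identity (without the Gaussian binomial). -/
noncomputable def TT (q : ℂ) (N j : ℕ) (b c : ℂ) : ℂ :=
  (-1) ^ j * (qPoch c q (2 * j) / qPoch (c ^ 2) (q ^ 2) j) * qPoch (b ^ 2) (q ^ 2) j *
    qPoch (b * q ^ (2 * j + 1) / q ^ N) q (2 * (N - j)) * (q ^ (j * j + j) / q ^ (2 * N * j))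

lemma TT_step1 (q : ℂ) (hq : q ≠ 0) (N j : ℕ) (hj : j ≤ N) (b c : ℂ) :
    TT q (N + 1) j b c =
      TT q N j b c * (1 - b * q ^ (2 * j) / q ^ N) * (1 - b * q ^ (N + 1)) / q ^ (2 * j) := by
  obtain ⟨d, rfl⟩ := Nat.exists_eq_add_of_le hj
  have e1 : 2 * (j + d + 1 - j) = (2 * d + 1) + 1 := by omega
  have e2 : 2 * (j + d - j) = 2 * d := by omega
  have e3 : b * q ^ (2 * j + 1) / q ^ (j + d + 1) = b * q ^ (2 * j) / q ^ (j + d) := by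
    field_simp
    ring
  have e4 : b * q ^ (2 * j) / q ^ (j + d) * q = b * q ^ (2 * j + 1) / q ^ (j + d) := by
    ring
  have e5 : b * q ^ (2 * j + 1) / q ^ (j + d) * q ^ (2 * d) = b * q ^ (j + d + 1) := by
    field_simp
    ring
  rw [TT, TT, e1, e2, e3, qPoch_succ', e4, qPoch_succ, e5]
  field_simp
  ring

lemma TT_step2 (q : ℂ) (hq : q ≠ 0) (N j : ℕ) (b c : ℂ)
    (hc1 : ∀ i : ℕ, 1 - c ^ 2 * q ^ (2 * i) ≠ 0) :
    TT q (N + 1) (j + 1) b c =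
      -(1 - b ^ 2) / (1 + c) / q ^ (2 * N) * (1 - c * q ^ (2 * j + 1)) * TT q N j (b * q) (c * q) := by
  have e1 : 2 * (N + 1 - (j + 1)) = 2 * (N - j) := by omega
  have e3 : b * q ^ (2 * (j + 1) + 1) / q ^ (N + 1) = b * q * q ^ (2 * j + 1) / q ^ N := by
    field_simp
    ring
  have hA : qPoch c q (2 * (j + 1)) =
      (1 - c) * (qPoch (c * q) q (2 * j) * (1 - c * q ^ (2 * j + 1))) := by
    rw [show 2 * (j + 1) = (2 * j + 1) + 1 by ring, qPoch_succ', qPoch_succ]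
    ring
  have h0 := hc1 0
  have h1 : 1 - c ≠ 0 := by
    intro h; apply h0; linear_combination (1 + c) * h
  have h2 : 1 + c ≠ 0 := by
    intro h; apply h0; linear_combination (1 - c) * h
  have h3 : qPoch ((c * q) ^ 2) (q ^ 2) j ≠ 0 := by
    apply qPoch_ne_zero
    intro i h
    apply hc1 (i + 1)
    rw [← h]; ring
  rw [TT, TT, e1, e3, hA, qPoch_succ', qPoch_succ', ← mul_pow, ← mul_pow,
    show 1 - c ^ 2 = (1 - c) * (1 + c) by ring]
  field_simp
  ring

noncomputable def LL (q : ℂ) (N : ℕ) (b c : ℂ) : ℂ :=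
  ∑ j ∈ Finset.range (N + 1), gb (q ^ 2) N j * TT q N j b c

noncomputable def KK (q : ℂ) (N : ℕ) (b c : ℂ) : ℂ :=
  ∑ j ∈ Finset.range (N + 1), gb (q ^ 2) N j * (TT q N j b c / q ^ (2 * j))

noncomputable def LC (q : ℂ) (N : ℕ) (b c : ℂ) : ℂ :=
  qPoch (-q) q N * qPoch b q N / qPoch (-c) q N * ∏ i ∈ Finset.range N, (c - b / q ^ i)


lemma LL_succ (q : ℂ) (hq : q ≠ 0) (hq1 : ∀ m : ℕ, 1 ≤ m → q ^ m ≠ 1)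
    (N : ℕ) (b c : ℂ) (hc1 : ∀ i : ℕ, 1 - c ^ 2 * q ^ (2 * i) ≠ 0) :
    LL q (N + 1) b c = (1 - b * q ^ (N + 1)) * (KK q N b c - b / q ^ N * LL q N b c)
      - (1 - b ^ 2) / (1 + c) * (KK q N (b * q) (c * q) - c * q * LL q N (b * q) (c * q)) := by
  have hp : ∀ m : ℕ, 1 ≤ m → (q ^ 2) ^ m ≠ 1 := by
    intro m hm; rw [← pow_mul]; exact hq1 _ (by omega)
  rw [LL, gb_sum1 _ hp, sub_eq_add_neg]
  simp only [LL, KK]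
  congr 1
  · rw [Finset.mul_sum, ← Finset.sum_sub_distrib, Finset.mul_sum]
    apply Finset.sum_congr rfl
    intro j hj
    rw [TT_step1 q hq N j (by simp at hj; omega)]
    field_simp
  · rw [Finset.mul_sum, ← Finset.sum_sub_distrib, Finset.mul_sum, ← Finset.sum_neg_distrib]
    apply Finset.sum_congr rfl
    intro j hj
    obtain ⟨d, rfl⟩ := Nat.exists_eq_add_of_le (show j ≤ N by simp at hj; omega)
    rw [TT_step2 q hq _ j b c hc1, Nat.add_sub_cancel_left]
    have h2 : 1 + c ≠ 0 := by
      intro h; apply hc1 0; linear_combination (1 - c) * h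
    field_simp
    ring

lemma KK_succ (q : ℂ) (hq : q ≠ 0) (hq1 : ∀ m : ℕ, 1 ≤ m → q ^ m ≠ 1)
    (N : ℕ) (b c : ℂ) (hc1 : ∀ i : ℕ, 1 - c ^ 2 * q ^ (2 * i) ≠ 0) :
    KK q (N + 1) b c = (1 - b * q ^ (N + 1)) * (KK q N b c - b / q ^ N * LL q N b c)
      - (1 - b ^ 2) / (1 + c) / q ^ (2 * N + 2) *
        (KK q N (b * q) (c * q) - c * q * LL q N (b * q) (c * q)) := by
  have hp : ∀ m : ℕ, 1 ≤ m → (q ^ 2) ^ m ≠ 1 := by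
    intro m hm; rw [← pow_mul]; exact hq1 _ (by omega)
  rw [KK, gb_sum2 _ hp, sub_eq_add_neg]
  simp only [LL, KK]
  congr 1
  · rw [Finset.mul_sum, ← Finset.sum_sub_distrib, Finset.mul_sum]
    apply Finset.sum_congr rfl
    intro j hj
    rw [TT_step1 q hq N j (by simp at hj; omega)]
    field_simp
    ring
  · rw [Finset.mul_sum, ← Finset.sum_sub_distrib, Finset.mul_sum, ← Finset.sum_neg_distrib]
    apply Finset.sum_congr rfl
    intro j hj
    rw [TT_step2 q hq _ j b c hc1]
    have h2 : 1 + c ≠ 0 := by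
      intro h; apply hc1 0; linear_combination (1 - c) * h
    field_simp
    ring

lemma LL_closed (q : ℂ) (hq : q ≠ 0) (hq1 : ∀ m : ℕ, 1 ≤ m → q ^ m ≠ 1)
    (N : ℕ) : ∀ b c : ℂ, (∀ i : ℕ, 1 - c ^ 2 * q ^ (2 * i) ≠ 0) →
    LL q N b c = LC q N b c ∧ LL q (N + 1) b c = LC q (N + 1) b c := by
  induction N with
  | zero =>
    intro b c hc1
    have hL0 : ∀ b c, LL q 0 b c = 1 := by
      intro b c; simp [LL, gb, TT, qPoch_zero]
    have hK0 : ∀ b c, KK q 0 b c = 1 := by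
      intro b c; simp [KK, gb, TT, qPoch_zero]
    refine ⟨by rw [hL0]; simp [LC, qPoch_zero], ?_⟩
    rw [LL_succ q hq hq1 0 b c hc1]
    simp only [hL0, hK0, LC, qPoch_succ, qPoch_zero, Finset.prod_range_succ, Finset.prod_range_zero]
    have h2 : 1 + c ≠ 0 := by
      intro h; apply hc1 0; linear_combination (1 - c) * h
    have h3 : 1 - -c ≠ 0 := by simpa using h2
    simp only [sub_neg_eq_add] at h3
    simp only [zero_add, pow_zero, pow_one, mul_one, one_mul, div_one, sub_neg_eq_add]
    field_simp
    ring
  | succ N ih =>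
    intro b c hc1
    refine ⟨(ih b c hc1).2, ?_⟩
    have hc1' : ∀ i : ℕ, 1 - (c * q) ^ 2 * q ^ (2 * i) ≠ 0 := by
      intro i h; apply hc1 (i + 1); rw [← h]; ring
    have hcm : ∀ i : ℕ, 1 + c * q ^ i ≠ 0 := by
      intro i h; apply hc1 i; linear_combination (1 - c * q ^ i) * h
    have h2 : 1 + c ≠ 0 := by simpa using hcm 0
    obtain ⟨i1, i2⟩ := ih b c hc1
    obtain ⟨j1, j2⟩ := ih (b * q) (c * q) hc1'
    have r0 := LL_succ q hq hq1 N b c hc1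
    have r1 := LL_succ q hq hq1 N (b * q) (c * q) hc1'
    have k1 := KK_succ q hq hq1 N b c hc1
    have k2 := KK_succ q hq hq1 N (b * q) (c * q) hc1'
    rw [LL_succ q hq hq1 (N + 1) b c hc1, i2, j2]
    rw [i1, i2] at r0
    rw [j1, j2] at r1
    rw [i1] at k1
    rw [j1] at k2
    generalize KK q (N + 1) b c = K1 at *
    generalize KK q (N + 1) (b * q) (c * q) = K2 at *
    generalize KK q N b c = k0 at *
    generalize KK q N (b * q) (c * q) = k00 at *
    generalize KK q N (b * q * q) (c * q * q) = k000 at *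
    generalize LL q N (b * q * q) (c * q * q) = l000 at *
    have hk : K1 = LC q (N + 1) b c + (1 - 1 / q ^ (2 * N + 2)) * ((1 - b ^ 2) / (1 + c)) *
        (k00 - c * q * LC q N (b * q) (c * q)) := by
      rw [r0, k1, j1]; ring
    have hk2 : K2 = LC q (N + 1) (b * q) (c * q) + (1 - 1 / q ^ (2 * N + 2)) *
        ((1 - (b * q) ^ 2) / (1 + c * q)) * (k000 - c * q * q * l000) := by
      rw [r1, k2]; ring
    have hk3 : (1 - (b * q) ^ 2) / (1 + c * q) * (k000 - c * q * q * l000) =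
        (1 - b * q * q ^ (N + 1)) * (k00 - b * q / q ^ N * LC q N (b * q) (c * q))
        - LC q (N + 1) (b * q) (c * q) := by
      rw [r1]; ring
    rw [mul_assoc, hk3] at hk2
    rw [hk, hk2]
    clear hk hk2 hk3 r0 r1 k1 k2 i1 i2 j1 j2 ih
    have hprod : ∀ M : ℕ, ∏ i ∈ Finset.range M, (c * q - b * q / q ^ i) =
        q ^ M * ∏ i ∈ Finset.range M, (c - b / q ^ i) := by
      intro M
      rw [← Finset.card_range M, ← Finset.prod_const, Finset.card_range, ← Finset.prod_mul_distrib]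
      apply Finset.prod_congr rfl
      intro i _
      ring
    have hX : qPoch (-(c * q)) q N ≠ 0 := by
      apply qPoch_ne_zero
      intro i h
      apply hcm (i + 1)
      linear_combination - h
    have s1 : qPoch b q (N + 1) = (1 - b) * qPoch (b * q) q N := qPoch_succ' _ _ _
    have s2 : qPoch (-c) q (N + 1) = (1 + c) * qPoch (-(c * q)) q N := by
      rw [qPoch_succ', neg_mul]; ring
    have s3 := hcm (N + 1)
    simp only [LC, hprod]
    rw [qPoch_succ b q (N + 1), qPoch_succ (-c) q (N + 1), s1, s2, qPoch_succ (b * q) q N,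
      qPoch_succ (-(c * q)) q N, qPoch_succ (-q) q (N + 1), qPoch_succ (-q) q N,
      Finset.prod_range_succ _ (N + 1), Finset.prod_range_succ _ N]
    generalize qPoch (-(c * q)) q N = U at *
    generalize qPoch (b * q) q N = V at *
    generalize qPoch (-q) q N = W at *
    generalize ∏ i ∈ Finset.range N, (c - b / q ^ i) = P at *
    have a1 : (1 : ℂ) - -c * q ^ (N + 1) = 1 + c * q * q ^ N := by ring
    have a2 : (1 : ℂ) - -(c * q) * q ^ N = 1 + c * q * q ^ N := by ring
    have a3 : (1 : ℂ) + c * q * q ^ N ≠ 0 := by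
      rw [pow_succ'] at s3; rwa [mul_assoc]
    have a4 : q ^ (2 * N + 2) = q ^ 2 * (q ^ N) ^ 2 := by ring
    have a5 : q ^ N ≠ 0 := pow_ne_zero _ hq
    rw [a1, a2, a4]
    simp only [pow_succ q (N + 1), pow_succ q N]
    generalize q ^ N = Y at *
    generalize hZ : 1 + c * q * Y = Z at *
    field_simp
    rw [← hZ]
    ring

lemma tri_succ (n : ℕ) : (n + 1) * (n + 1 - 1) / 2 = n * (n - 1) / 2 + n := by
  rw [← Finset.sum_range_id, ← Finset.sum_range_id, Finset.sum_range_succ]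

lemma tri_two (n : ℕ) : n * n = 2 * (n * (n - 1) / 2) + n := by
  induction n with
  | zero => simp
  | succ n ih => rw [tri_succ]; nlinarith

lemma tri_add (m n : ℕ) : (m + n) * (m + n - 1) / 2 =
    m * (m - 1) / 2 + n * (n - 1) / 2 + m * n := by
  have h1 := tri_two m
  have h2 := tri_two n
  have h3 := tri_two (m + n)
  nlinarith

lemma prod_closed (q : ℂ) (hq : q ≠ 0) (b c : ℂ) (hb : b ≠ 0) (N : ℕ) :
    ∏ i ∈ Finset.range N, (c - b / q ^ i) =
      (-1) ^ N * b ^ N / q ^ (N * (N - 1) / 2) * qPoch (c / b) q N := by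
  induction N with
  | zero => simp [qPoch_zero]
  | succ N ih =>
    rw [Finset.prod_range_succ, ih, tri_succ, qPoch_succ, pow_add q]
    field_simp
    ring

lemma qPoch_rev (q : ℂ) (hq : q ≠ 0) (y : ℂ) (hy : y ≠ 0) (m : ℕ) :
    qPoch (1 / y) q m = (-1) ^ m / y ^ m * q ^ (m * (m - 1) / 2) * qPoch (y * q / q ^ m) q m := by
  induction m with
  | zero => simp [qPoch_zero]
  | succ m ih =>
    have e1 : y * q / q ^ (m + 1) = y / q ^ m := by field_simp; ring
    have e2 : y / q ^ m * q = y * q / q ^ m := by ring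
    rw [qPoch_succ, ih, tri_succ, e1, qPoch_succ', e2, pow_add q]
    field_simp
    ring

lemma pow_balance (q B : ℂ) (hq : q ≠ 0) (hB : B ≠ 0) (r j d : ℕ) :
    (-1) ^ d / (B * q ^ (r + j)) ^ d * q ^ (d * (d - 1) / 2) * (B ^ (r + j))⁻¹ *
      (q ^ ((r + j) * (r + j - 1) / 2))⁻¹ =
    (-1) ^ (j + d) / (B * q ^ r) ^ (j + d) * q ^ ((j + d) * (j + d - 1) / 2) * (B ^ r)⁻¹ *
      (q ^ (r * (r - 1) / 2))⁻¹ * ((-1) ^ j * (q ^ (j * j + j) / q ^ (2 * (j + d) * j))) := by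
  have h := tri_two j
  have h' : 2 * (j + d) * j = 4 * (j * (j - 1) / 2) + 2 * j + 2 * d * j := by nlinarith
  rw [tri_add, tri_add, h', h]
  generalize j * (j - 1) / 2 = t at *
  generalize r * (r - 1) / 2 = s at *
  generalize d * (d - 1) / 2 = u at *
  have h1 : ((-1 : ℂ)) ^ (j + d) * (-1) ^ j = (-1) ^ d := by
    rw [pow_add, mul_right_comm, ← mul_pow]; simp
  rw [← h1]
  simp only [mul_pow, pow_add, pow_mul]
  field_simp
  simp only [← pow_mul, ← pow_add]
  ring


lemma term_eq (q a B : ℂ) (hq : q ≠ 0) (hB : B ≠ 0)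
    (hq1 : ∀ m : ℕ, 1 ≤ m → q ^ m ≠ 1)
    (r j d : ℕ) :
    (qPoch (-(a * q)) q (2 * (r + j)) * qPoch (B ^ 2) (q ^ 2) (r + j) *
            qPoch (q ^ (-((r + j : ℕ) : ℤ)) / B) q d * qPoch (B * q ^ (r + j + 1)) q d) /
          (qPoch (-(a * q) / B) q (r + (j + d)) * qPoch B q (r + (j + d)) *
            qPoch (q ^ 2) (q ^ 2) d) *
          B ^ (-((r + j : ℕ) : ℤ)) * q ^ (-(((r + j) * (r + j - 1) / 2 : ℕ) : ℤ)) /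
      (qPoch (q ^ 2) (q ^ 2) j * qPoch (a ^ 2 * q ^ 2) (q ^ 2) (r + j + r)) =
    (qPoch (-(a * q)) q (2 * r) * qPoch (B ^ 2) (q ^ 2) r /
      (qPoch (-(a * q) / B) q (r + (j + d)) * qPoch B q (r + (j + d)) *
        qPoch (a ^ 2 * q ^ 2) (q ^ 2) (2 * r) * qPoch (q ^ 2) (q ^ 2) (j + d)) *
      ((-1) ^ (j + d) / (B * q ^ r) ^ (j + d) * q ^ ((j + d) * (j + d - 1) / 2) * (B ^ r)⁻¹ *
      (q ^ (r * (r - 1) / 2))⁻¹)) *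
      (gb (q ^ 2) (j + d) j * TT q (j + d) j (B * q ^ r) (-(a * q) * q ^ (2 * r))) := by
  have hp : ∀ m : ℕ, 1 ≤ m → (q ^ 2) ^ m ≠ 1 := by
    intro m hm; rw [← pow_mul]; exact hq1 _ (by omega)
  have hP := pp_ne (q ^ 2) hp (j + d)
  have e1 : qPoch (-(a * q)) q (2 * (r + j)) =
      qPoch (-(a * q)) q (2 * r) * qPoch (-(a * q) * q ^ (2 * r)) q (2 * j) := by
    rw [mul_add, qPoch_add]
  have e2 : qPoch (B ^ 2) (q ^ 2) (r + j) =
      qPoch (B ^ 2) (q ^ 2) r * qPoch ((B * q ^ r) ^ 2) (q ^ 2) j := by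
    rw [qPoch_add]; congr 2; ring
  have e3 : q ^ (-((r + j : ℕ) : ℤ)) / B = 1 / (B * q ^ (r + j)) := by
    rw [zpow_neg, zpow_natCast]; field_simp
  have e4 : qPoch (a ^ 2 * q ^ 2) (q ^ 2) (r + j + r) = qPoch (a ^ 2 * q ^ 2) (q ^ 2) (2 * r) *
      qPoch ((-(a * q) * q ^ (2 * r)) ^ 2) (q ^ 2) j := by
    rw [show r + j + r = 2 * r + j by ring, qPoch_add]; congr 2; ring
  have e5 : qPoch (B * q ^ r * q ^ (2 * j + 1) / q ^ (j + d)) q (2 * d) =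
      qPoch (B * q ^ (r + j) * q / q ^ d) q d * qPoch (B * q ^ (r + j + 1)) q d := by
    rw [two_mul d, qPoch_add]
    congr 2
    · field_simp; ring
    · field_simp; ring
  have e6 : j + d - j = d := by omega
  rw [e1, e2, e3, e4, qPoch_rev q hq _ (mul_ne_zero hB (pow_ne_zero _ hq)), gb,
    if_pos (by omega), TT, e6, e5, zpow_neg, zpow_neg, zpow_natCast, zpow_natCast]
  have hb := pow_balance q B hq hB r j d
  rw [show ∀ A1 A2 A3 A4 S1 S2 S3 S4 D1 D2 D3 D4 D5 D6 : ℂ,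
      A1 * A2 * (S1 * S2 * A3) * A4 / (D1 * D2 * D3) * S3 * S4 / (D4 * (D5 * D6)) =
      A1 * A2 * A3 * A4 * (S1 * S2 * S3 * S4) / (D1 * D2 * D3 * D4 * D5 * D6) by
        intros; ring]
  rw [hb]
  generalize (-1 : ℂ) ^ (j + d) / (B * q ^ r) ^ (j + d) * q ^ ((j + d) * (j + d - 1) / 2) *
    (B ^ r)⁻¹ * (q ^ (r * (r - 1) / 2))⁻¹ = Z1
  generalize q ^ (j * j + j) / q ^ (2 * (j + d) * j) = Z2
  generalize (-1 : ℂ) ^ j = Z3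
  clear hb e1 e2 e3 e4 e5
  generalize qPoch (q ^ 2) (q ^ 2) (j + d) = P at *
  rw [show ∀ A D E F H : ℂ, A / (D * P) * E * (P / F * H) =
    A / D * E * (1 / F * H) * (P / P) by intros; ring,
    div_self hP]
  ring


lemma bailey_inner_sum (q a B : ℂ)
    (hq : q ≠ 0) (hB : B ≠ 0)
    (hq1 : ∀ m : ℕ, 1 ≤ m → q ^ m ≠ 1)
    (ha1 : ∀ m : ℕ, 1 ≤ m → a * q ^ m ≠ 1)
    (ha2 : ∀ m : ℕ, 1 ≤ m → a ^ 2 * q ^ (2 * m) ≠ 1)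
    (hB1 : ∀ j : ℕ, B * q ^ j ≠ 1)
    (hB2 : ∀ j : ℕ, a * q ^ (j + 1) ≠ -B)
    (r N : ℕ) :
    ∑ j ∈ Finset.range (N + 1), (qPoch (-(a * q)) q (2 * (r + j)) *
            qPoch (B ^ 2) (q ^ 2) (r + j) *
            qPoch (q ^ (-((r + j : ℕ) : ℤ)) / B) q (r + N - (r + j)) *
            qPoch (B * q ^ (r + j + 1)) q (r + N - (r + j))) /
          (qPoch (-(a * q) / B) q (r + N) * qPoch B q (r + N) *
            qPoch (q ^ 2) (q ^ 2) (r + N - (r + j))) *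
          B ^ (-((r + j : ℕ) : ℤ)) * q ^ (-(((r + j) * (r + j - 1) / 2 : ℕ) : ℤ)) /
      (qPoch (q ^ 2) (q ^ 2) (r + j - r) * qPoch (a ^ 2 * q ^ 2) (q ^ 2) (r + j + r)) =
    qPoch (-B) q r / qPoch (-(a * q) / B) q r * B ^ (-(r : ℤ)) *
        q ^ (-((r * (r - 1) / 2 : ℕ) : ℤ)) / (qPoch q q N * qPoch (a * q) q (r + N + r)) := by
  have hc1 : ∀ i : ℕ, 1 - (-(a * q) * q ^ (2 * r)) ^ 2 * q ^ (2 * i) ≠ 0 := by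
    intro i h
    apply ha2 (2 * r + i + 1) (by omega)
    linear_combination - h
  have hL := (LL_closed q hq hq1 N (B * q ^ r) (-(a * q) * q ^ (2 * r)) hc1).1
  have hb : B * q ^ r ≠ 0 := mul_ne_zero hB (pow_ne_zero _ hq)
  have e0 : ∀ j, r + N - (r + j) = N - j := by intro j; omega
  have e00 : ∀ j, r + j - r = j := by intro j; omega
  simp only [e0, e00]
  rw [Finset.sum_congr rfl (g := fun j =>
    (qPoch (-(a * q)) q (2 * r) * qPoch (B ^ 2) (q ^ 2) r /
      (qPoch (-(a * q) / B) q (r + N) * qPoch B q (r + N) *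
        qPoch (a ^ 2 * q ^ 2) (q ^ 2) (2 * r) * qPoch (q ^ 2) (q ^ 2) N) *
      ((-1) ^ N / (B * q ^ r) ^ N * q ^ (N * (N - 1) / 2) * (B ^ r)⁻¹ *
      (q ^ (r * (r - 1) / 2))⁻¹)) *
      (gb (q ^ 2) N j * TT q N j (B * q ^ r) (-(a * q) * q ^ (2 * r))))
    (fun j hj => by
      have h := term_eq q a B hq hB hq1 r j (N - j)
      rw [show j + (N - j) = N by simp at hj; omega] at h
      exact h), ← Finset.mul_sum]
  rw [LL] at hL
  rw [hL, LC, prod_closed q hq _ _ hb, zpow_neg, zpow_neg, zpow_natCast, zpow_natCast]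
  have f1 : -(a * q) * q ^ (2 * r) / (B * q ^ r) = -(a * q) / B * q ^ r := by
    field_simp
    ring
  have f2 : qPoch (a ^ 2 * q ^ 2) (q ^ 2) (2 * r) =
      qPoch (a * q) q (2 * r) * qPoch (-(a * q)) q (2 * r) := by
    rw [← qPoch_sq, mul_pow]
  have f3 : qPoch (a * q) q (r + N + r) =
      qPoch (a * q) q (2 * r) * qPoch (-(-(a * q) * q ^ (2 * r))) q N := by
    rw [show r + N + r = 2 * r + N by ring, qPoch_add]; congr 2; ring
  rw [f1, f2, f3, qPoch_sq B, qPoch_sq q, qPoch_add _ _ r N, qPoch_add _ _ r N]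
  have g1 : qPoch q q N ≠ 0 := pp_ne q hq1 N
  have g2 : qPoch (-q) q N ≠ 0 := by
    apply qPoch_ne_zero
    intro i h
    apply hq1 (2 * (i + 1)) (by omega)
    linear_combination (-q * q ^ i + 1) * h
  have g3 : ∀ n, qPoch (-(a * q) / B) q n ≠ 0 := by
    intro n
    apply qPoch_ne_zero
    intro i h
    apply hB2 i
    field_simp at h
    linear_combination - h
  have g4 := g3 r
  have g5 := g3 (r + N)
  rw [qPoch_add] at g5
  have g5 := right_ne_zero_of_mul g5
  have g6 : ∀ n, qPoch B q n ≠ 0 := fun n => qPoch_ne_zero _ _ _ hB1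
  have g7 := g6 r
  have g8 := g6 (r + N)
  rw [qPoch_add] at g8
  have g8 := right_ne_zero_of_mul g8
  have g9 : qPoch (-(a * q)) q (2 * r) ≠ 0 := by
    apply qPoch_ne_zero
    intro i h
    apply ha2 (i + 1) (by omega)
    linear_combination (1 - a * q * q ^ i) * h
  have g10 : ∀ n, qPoch (a * q) q n ≠ 0 := by
    intro n
    apply qPoch_ne_zero
    intro i h
    apply ha1 (i + 1) (by omega)
    linear_combination h
  have g11 := g10 (2 * r)
  have g12 : qPoch (-(-(a * q) * q ^ (2 * r))) q N ≠ 0 := by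
    have := g10 (r + N + r)
    rw [f3] at this
    exact right_ne_zero_of_mul this
  generalize qPoch (-(-(a * q) * q ^ (2 * r))) q N = X1 at *
  generalize qPoch (-(a * q) / B * q ^ r) q N = X2 at *
  generalize qPoch (-(a * q) / B) q r = X3 at *
  generalize qPoch (B * q ^ r) q N = X4 at *
  have hs : ((-1 : ℂ)) ^ N * (-1) ^ N = 1 := by rw [← mul_pow]; simp
  generalize ((-1 : ℂ)) ^ N = s at *
  generalize B * q ^ r = b at *
  field_simp
  linear_combination qPoch (-B) q r * hs

/-- Theorem 2.1: base change from `(a², q²)` to `(a, q)`. -/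
theorem bailey_base_change_thm21 (q a B : ℂ)
    (hq : q ≠ 0) (ha : a ≠ 0) (hB : B ≠ 0)
    (hq1 : ∀ m : ℕ, 1 ≤ m → q ^ m ≠ 1)
    (ha1 : ∀ m : ℕ, 1 ≤ m → a * q ^ m ≠ 1)
    (ha2 : ∀ m : ℕ, 1 ≤ m → a ^ 2 * q ^ (2 * m) ≠ 1)
    (hB1 : ∀ j : ℕ, B * q ^ j ≠ 1)
    (hB2 : ∀ j : ℕ, a * q ^ (j + 1) ≠ -B)
    (α β : ℕ → ℂ)
    (hpair : IsBaileyPair (a ^ 2) (q ^ 2) α β) :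
    IsBaileyPair a q
      (fun r => qPoch (-B) q r / qPoch (-(a * q) / B) q r * B ^ (-(r : ℤ)) *
        q ^ (-((r * (r - 1) / 2 : ℕ) : ℤ)) * α r)
      (fun n => ∑ k ∈ Finset.range (n + 1),
        (qPoch (-(a * q)) q (2 * k) * qPoch (B ^ 2) (q ^ 2) k *
            qPoch (q ^ (-(k : ℤ)) / B) q (n - k) * qPoch (B * q ^ (k + 1)) q (n - k)) /
          (qPoch (-(a * q) / B) q n * qPoch B q n * qPoch (q ^ 2) (q ^ 2) (n - k)) *
          B ^ (-(k : ℤ)) * q ^ (-((k * (k - 1) / 2 : ℕ) : ℤ)) * β k) := by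
  intro n
  have hβ : ∀ k, β k = ∑ r ∈ Finset.range (k + 1), α r /
      (qPoch (q ^ 2) (q ^ 2) (k - r) * qPoch (a ^ 2 * q ^ 2) (q ^ 2) (k + r)) := hpair
  simp only [hβ, Finset.mul_sum]
  rw [Finset.sum_comm' (s' := fun r => Finset.Ico r (n + 1)) (t' := Finset.range (n + 1))
    (by intro x y; simp only [Finset.mem_range, Finset.mem_Ico]; omega)]
  apply Finset.sum_congr rfl
  intro r hr
  obtain ⟨N, rfl⟩ := Nat.exists_eq_add_of_le (show r ≤ n by simp at hr; omega)
  have h := bailey_inner_sum q a B hq hB hq1 ha1 ha2 hB1 hB2 r N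
  rw [Finset.sum_Ico_eq_sum_range, show r + N + 1 - r = N + 1 by omega,
    Nat.add_sub_cancel_left]
  rw [mul_div_right_comm, ← h, Finset.sum_mul]
  apply Finset.sum_congr rfl
  intro j _
  ring
end

section
/- Let q, a, B be nonzero complex numbers such that q^m ≠ 1 for all m ≥ 1, a^2 q^{2m} ≠ 1 and a^4 q^{4m} ≠ 1 for all m ≥ 1, and a^2 q^{2j} ≠ -1 and a^4 q^{4j+2} ≠ B^2 for all j ≥ 0 (so that all denominators below are nonzero). Suppose (α_n, β_n) is a Bailey pair with parameters (a^2, q^2). Define γ_n = ∑_{k=0}^{n} [(qa^2/B;q^2)_{2n-k} (-Bq;q^2)_k / ((-q^2 a^2;q^2)_{2n} (a^4 q^2/B^2;q^4)_n (q^4;q^4)_{n-k})] · a^{2k} B^{-k} q^{k^2} · β_k and α'_r = ((-Bq;q^2)_r / (-q a^2/B;q^2)_r) · a^{2r} B^{-r} q^{r^2} · α_r. Then (α'_n, γ_n) is a Bailey pair with parameters (a^4, q^4). -/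
lemma qP_succ (x p : ℂ) (n : ℕ) : qPoch x p (n+1) = qPoch x p n * (1 - x * p ^ n) := by
  simp [qPoch, Finset.prod_range_succ]

lemma qP_zero (x p : ℂ) : qPoch x p 0 = 1 := by simp [qPoch]

lemma qP_add (x p : ℂ) (m n : ℕ) :
    qPoch x p (m+n) = qPoch x p m * qPoch (x * p ^ m) p n := by
  simp only [qPoch, Finset.prod_range_add]
  congr 1
  refine Finset.prod_congr rfl fun i _ => ?_
  rw [pow_add]; ring

lemma qP_succ' (x p : ℂ) (n : ℕ) : qPoch x p (n+1) = (1 - x) * qPoch (x * p) p n := by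
  rw [add_comm, qP_add, qP_succ, qP_zero]; simp

lemma qP_sq (x p : ℂ) (n : ℕ) :
    qPoch (x^2) (p^2) n = qPoch x p n * qPoch (-x) p n := by
  simp only [qPoch, ← Finset.prod_mul_distrib]
  refine Finset.prod_congr rfl fun i _ => ?_
  ring

lemma qP_ne (x p : ℂ) (h : ∀ j : ℕ, x * p ^ j ≠ 1) (n : ℕ) : qPoch x p n ≠ 0 := by
  rw [qPoch, Finset.prod_ne_zero_iff]
  intro j _ h0
  exact h j (by linear_combination -h0)

/-- The product `∏_{i<k} c p^i`. -/
noncomputable def wProd (c p : ℂ) (k : ℕ) : ℂ := ∏ i ∈ Finset.range k, (c * p ^ i)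

lemma wP_succ (x p : ℂ) (n : ℕ) : wProd x p (n+1) = wProd x p n * (x * p ^ n) := by
  simp [wProd, Finset.prod_range_succ]

lemma wP_add (x p : ℂ) (m n : ℕ) :
    wProd x p (m+n) = wProd x p m * wProd (x * p ^ m) p n := by
  simp only [wProd, Finset.prod_range_add]
  congr 1
  refine Finset.prod_congr rfl fun i _ => ?_
  rw [pow_add]; ring

/-- summand of the q-Saalschütz sum -/
noncomputable def sT (u v p z : ℂ) (N j : ℕ) : ℂ :=
  qPoch (u*v*z*p^j) p (N-j) * qPoch z p (N-j) * qPoch u p j * qPoch v p j * z^j /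
    (qPoch p p j * qPoch p p (N-j))

/-- q-Saalschütz -/
lemma saal (p : ℂ) (hp : ∀ m : ℕ, 1 ≤ m → p ^ m ≠ 1) (u v : ℂ) (N : ℕ) : ∀ z : ℂ,
    ∑ j ∈ Finset.range (N+1), sT u v p z N j
      = qPoch (v*z) p N * qPoch (u*z) p N / qPoch p p N := by
  have hpp : ∀ n, qPoch p p n ≠ 0 := qP_ne p p (fun j => by
    have := hp (j+1) (by omega)
    rwa [pow_succ'] at this)
  have hp1 : ∀ m : ℕ, 1 - p^(m+1) ≠ 0 := fun m h => hp (m+1) (by omega) (by linear_combination -h)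
  induction N with
  | zero => intro z; simp [sT, qP_zero]
  | succ N ih =>
    intro z
    set X : ℕ → ℂ := fun j => qPoch (u*v*z*p^j) p (N+1-j) * qPoch (z*p) p (N-j) * (p^j - z) *
      qPoch u p j * qPoch v p j * z^j / (qPoch p p j * qPoch p p (N-j)) with hX
    set Y : ℕ → ℂ := fun j => qPoch (u*v*z*p^(j+1)) p (N-j) * qPoch (z*p) p (N-j) *
      qPoch u p (j+1) * qPoch v p (j+1) * z^(j+1) / (qPoch p p j * qPoch p p (N-j)) with hY
    have h1 : ∀ j ∈ Finset.range (N+1),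
        X j + Y j = (1-u*z)*(1-v*z) * sT u v p (z*p) N j := by
      intro j hj
      rw [Finset.mem_range] at hj
      obtain ⟨i, rfl⟩ : ∃ i, N = j + i := ⟨N - j, by omega⟩
      have e1 : j + i + 1 - j = i + 1 := by omega
      have e2 : j + i - j = i := by omega
      simp only [hX, hY, sT, e1, e2]
      have := hpp j
      have := hpp i
      rw [qP_succ', qP_succ u, qP_succ v,
        show u*v*(z*p)*p^j = u*v*z*p^(j+1) by ring, show u*v*z*p^j*p = u*v*z*p^(j+1) by ring]
      rw [← add_div, mul_div_assoc']
      congr 1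
      rw [mul_pow]
      ring
    have h2 : (1 - p^(N+1)) * ∑ j ∈ Finset.range (N+1+1), sT u v p z (N+1) j
        = ∑ j ∈ Finset.range (N+1), X j + ∑ j ∈ Finset.range (N+1), Y j := by
      set X2 : ℕ → ℂ := fun j => qPoch (u*v*z*p^j) p (N+1-j) * qPoch (z*p) p (N-j) * (p^j - z) *
        (1 - p^(N+1-j)) * qPoch u p j * qPoch v p j * z^j /
          (qPoch p p j * qPoch p p (N+1-j)) with hX2
      set Y2 : ℕ → ℂ := fun j => qPoch (u*v*z*p^j) p (N+1-j) * qPoch (z*p) p (N+1-j) * (1 - p^j) *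
        qPoch u p j * qPoch v p j * z^j / (qPoch p p j * qPoch p p (N+1-j)) with hY2
      have k1 : ∀ j ∈ Finset.range (N+1+1),
          (1 - p^(N+1)) * sT u v p z (N+1) j = X2 j + Y2 j := by
        intro j hj
        rw [Finset.mem_range] at hj
        simp only [hX2, hY2, sT]
        rw [← add_div, mul_div_assoc']
        congr 1
        rcases Nat.lt_or_ge j (N+1) with h | h
        · obtain ⟨i, rfl⟩ : ∃ i, N = j + i := ⟨N - j, by omega⟩
          have d1 : j + i + 1 - j = i + 1 := by omega
          have d2 : j + i - j = i := by omega
          rw [d1, d2, qP_succ' z, qP_succ (z*p)]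
          ring
        · obtain rfl : j = N + 1 := by omega
          simp [qP_zero]
          ring
      have k2 : ∀ j ∈ Finset.range (N+1), X2 j = X j := by
        intro j hj
        rw [Finset.mem_range] at hj
        obtain ⟨i, rfl⟩ : ∃ i, N = j + i := ⟨N - j, by omega⟩
        have d1 : j + i + 1 - j = i + 1 := by omega
        have d2 : j + i - j = i := by omega
        simp only [hX2, hX, d1, d2]
        have := hpp j
        have := hpp i
        have := hp1 i
        rw [qP_succ p p i, ← pow_succ']
        field_simp
      have k3 : ∀ j ∈ Finset.range (N+1), Y2 (j+1) = Y j := by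
        intro j hj
        rw [Finset.mem_range] at hj
        have d1 : N + 1 - (j + 1) = N - j := by omega
        simp only [hY2, hY, d1]
        have := hpp j
        have := hpp (N-j)
        have := hp1 j
        rw [qP_succ p p j, ← pow_succ']
        field_simp
      rw [Finset.mul_sum, Finset.sum_congr rfl k1, Finset.sum_add_distrib,
        Finset.sum_range_succ X2, Finset.sum_range_succ' Y2, Finset.sum_congr rfl k2,
        Finset.sum_congr rfl k3]
      have k4 : X2 (N+1) = 0 := by simp [hX2]
      have k5 : Y2 0 = 0 := by simp [hY2]
      rw [k4, k5]; ring
    rw [← Finset.sum_add_distrib, Finset.sum_congr rfl h1, ← Finset.mul_sum, ih] at h2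
    have := hp1 N
    have := hpp N
    rw [qP_succ p, qP_succ' (v*z), qP_succ' (u*z), ← mul_assoc u, ← mul_assoc v] at *
    rw [← pow_succ'] at *
    rw [eq_div_iff (mul_ne_zero ‹_› ‹_›)]
    have h4 := congrArg (· * qPoch p p N) h2
    simp only [mul_assoc, div_mul_cancel₀ _ (hpp N)] at h4
    rw [← mul_assoc v z p, ← mul_assoc u z p] at h4
    linear_combination h4

lemma uz_lem (p c : ℂ) (hp0 : p ≠ 0) (j : ℕ) : ∀ i : ℕ,
    qPoch (-(p^(i+j))⁻¹) p j * (c*p^(i+j))^j * qPoch (-p) p i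
      = wProd c p j * qPoch (-p) p (i+j) := by
  suffices h : ∀ N i, N = i + j → qPoch (-(p^N)⁻¹) p j * (c*p^N)^j * qPoch (-p) p i
      = wProd c p j * qPoch (-p) p N from fun i => h _ i rfl
  induction j with
  | zero => intro N i h; simp at h; subst h; simp [qP_zero, wProd]
  | succ j ih =>
    intro N i h
    have := ih N (i+1) (by omega)
    rw [qP_succ (-p)] at this
    rw [qP_succ, wP_succ]
    have e : (1 - -(p^N)⁻¹ * p^j) * p^N = p^j * (1 - -p*p^i) := by
      rw [sub_mul, neg_mul, neg_mul, mul_assoc, mul_comm (p^j), ← mul_assoc,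
        inv_mul_cancel₀ (pow_ne_zero _ hp0), h]
      ring
    rw [pow_succ]
    linear_combination (c * p^j) * this + qPoch (-(p^N)⁻¹) p j * (c*p^N)^j * c * qPoch (-p) p i * e

lemma core (p A c : ℂ) (hp0 : p ≠ 0) (hc0 : c ≠ 0)
    (hp : ∀ m : ℕ, 1 ≤ m → p ^ m ≠ 1) (hA : ∀ m : ℕ, 1 ≤ m → A * p ^ m ≠ 1)
    (N : ℕ) :
    ∑ j ∈ Finset.range (N+1), qPoch c p (2*N-j) * qPoch (-(p*A/c)) p j * wProd c p j /
        (qPoch (p^2) (p^2) (N-j) * qPoch p p j * qPoch (A*p) p j)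
      = qPoch (-(p^(N+1)*A)) p N * qPoch (c^2) (p^2) N / (qPoch (p^2) (p^2) N * qPoch (A*p) p N) := by
  have hpp : ∀ n, qPoch p p n ≠ 0 := qP_ne p p (fun j => by
    have := hp (j+1) (by omega)
    rwa [pow_succ'] at this)
  have hmp : ∀ n, qPoch (-p) p n ≠ 0 := qP_ne _ p (fun j h => by
    apply hp (2*(j+1)) (by omega)
    have : p^(2*(j+1)) = (-p*p^j)^2 := by ring
    rw [this, h]; norm_num)
  have hAp : ∀ n, qPoch (A*p) p n ≠ 0 := qP_ne _ p (fun j => by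
    have := hA (j+1) (by omega)
    rwa [pow_succ', ← mul_assoc] at this)
  have hpN : p^N ≠ 0 := pow_ne_zero _ hp0
  have h := saal p hp (-(p^N)⁻¹) (-(p*A/c)) N (c*p^N)
  have e1 : -(p*A/c) * (c*p^N) = -(p^(N+1)*A) := by field_simp; ring
  have e2 : -(p^N)⁻¹ * (c*p^N) = -c := by field_simp
  have e3 : -(p^N)⁻¹ * -(p*A/c) * (c*p^N) = A*p := by field_simp
  rw [e1, e2] at h
  have h3 : ∀ j ∈ Finset.range (N+1), qPoch c p (2*N-j) * qPoch (-(p*A/c)) p j * wProd c p j /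
        (qPoch (p^2) (p^2) (N-j) * qPoch p p j * qPoch (A*p) p j)
      = qPoch c p N / (qPoch (A*p) p N * qPoch (-p) p N) *
        sT (-(p^N)⁻¹) (-(p*A/c)) p (c*p^N) N j := by
    intro j hj
    rw [Finset.mem_range] at hj
    obtain ⟨i, rfl⟩ : ∃ i, N = i + j := ⟨N - j, by omega⟩
    have f1 : 2*(i+j) - j = i + j + i := by omega
    have f2 : i + j - j = i := by omega
    have hu := uz_lem p c hp0 j i
    simp only [sT, e3, f1, f2]
    rw [qP_add c p (i+j) i, qP_sq]
    have g : qPoch (A*p) p (i+j) = qPoch (A*p) p j * qPoch (A*p*p^j) p i := by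
      rw [add_comm, qP_add]
    have n1 := hAp (i+j)
    have n2 := hmp (i+j)
    have n3 := hAp j
    have n4 := hmp i
    have n5 := hpp i
    have n6 := hpp j
    rw [div_mul_div_comm, div_eq_div_iff (by simp [n3, n4, n5, n6]) (by simp [n1, n2, n5, n6]), g]
    linear_combination (-(qPoch c p (i+j) * qPoch (c*p^(i+j)) p i * qPoch (-(p*A/c)) p j *
      qPoch (A*p) p j * qPoch (A*p*p^j) p i * qPoch p p i * qPoch p p j)) * hu
  rw [Finset.sum_congr rfl h3, ← Finset.mul_sum, h, qP_sq, qP_sq]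
  have n1 := hAp N
  have n2 := hmp N
  have n5 := hpp N
  field_simp

lemma key (p A c : ℂ) (hp0 : p ≠ 0) (hc0 : c ≠ 0)
    (hp : ∀ m : ℕ, 1 ≤ m → p ^ m ≠ 1) (hA : ∀ m : ℕ, 1 ≤ m → A * p ^ m ≠ 1)
    (hA' : ∀ m : ℕ, A * p ^ m ≠ -1) (hc : ∀ j : ℕ, c^2 * (p^2)^j ≠ 1) (N r : ℕ) :
    ∑ j ∈ Finset.range (N+1), qPoch c p (2*(r+N)-(r+j)) * qPoch (-(p*A/c)) p (r+j) /
        (qPoch (-(p*A)) p (2*(r+N)) * qPoch (c^2) (p^2) (r+N) * qPoch (p^2) (p^2) (r+N-(r+j))) *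
        wProd c p (r+j) / (qPoch p p (r+j-r) * qPoch (A*p) p (r+j+r))
      = qPoch (-(p*A/c)) p r / qPoch (-c) p r * wProd c p r /
        (qPoch (p^2) (p^2) (r+N-r) * qPoch (A^2*p^2) (p^2) (r+N+r)) := by
  have hpp : ∀ n, qPoch p p n ≠ 0 := qP_ne p p (fun j => by
    have := hp (j+1) (by omega)
    rwa [pow_succ'] at this)
  have hmp : ∀ n, qPoch (p^2) (p^2) n ≠ 0 := qP_ne _ _ (fun j => by
    have := hp (2*(j+1)) (by omega)
    rwa [pow_mul, pow_succ'] at this)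
  have hAp : ∀ n, qPoch (A*p) p n ≠ 0 := qP_ne _ p (fun j => by
    have := hA (j+1) (by omega)
    rwa [pow_succ', ← mul_assoc] at this)
  have hAm : ∀ n, qPoch (-(p*A)) p n ≠ 0 := qP_ne _ p (fun j h => by
    apply hA' (j+1)
    rw [pow_succ']; linear_combination -h)
  have hcc : ∀ n, qPoch (c^2) (p^2) n ≠ 0 := qP_ne _ _ hc
  have hcp : ∀ n, qPoch c p n ≠ 0 := fun n h => hcc n (by rw [qP_sq, h, zero_mul])
  have hcm : ∀ n, qPoch (-c) p n ≠ 0 := fun n h => hcc n (by rw [qP_sq, h, mul_zero])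
  have hpr : p^r ≠ 0 := pow_ne_zero _ hp0
  have h := core p (A*p^(2*r)) (c*p^r) hp0 (mul_ne_zero hc0 hpr) hp (fun m hm => by
    have := hA (2*r+m) (by omega)
    rwa [pow_add, ← mul_assoc] at this) N
  have e1 : p*(A*p^(2*r))/(c*p^r) = p*A/c*p^r := by
    field_simp; ring
  rw [e1] at h
  have h3 : ∀ j ∈ Finset.range (N+1), qPoch c p (2*(r+N)-(r+j)) * qPoch (-(p*A/c)) p (r+j) /
        (qPoch (-(p*A)) p (2*(r+N)) * qPoch (c^2) (p^2) (r+N) * qPoch (p^2) (p^2) (r+N-(r+j))) *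
        wProd c p (r+j) / (qPoch p p (r+j-r) * qPoch (A*p) p (r+j+r))
      = (qPoch c p r * qPoch (-(p*A/c)) p r * wProd c p r /
        (qPoch (-(p*A)) p (2*(r+N)) * qPoch (c^2) (p^2) (r+N) * qPoch (A*p) p (2*r))) *
        (qPoch (c*p^r) p (2*N-j) * qPoch (-(p*A/c*p^r)) p j * wProd (c*p^r) p j /
        (qPoch (p^2) (p^2) (N-j) * qPoch p p j * qPoch (A*p^(2*r)*p) p j)) := by
    intro j hj
    rw [Finset.mem_range] at hj
    have f1 : 2*(r+N)-(r+j) = r + (2*N-j) := by omega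
    have f2 : r+N-(r+j) = N-j := by omega
    have f3 : r+j-r = j := by omega
    have f4 : r+j+r = 2*r+j := by omega
    rw [f1, f2, f3, f4, qP_add c, qP_add (-(p*A/c)), wP_add, qP_add (A*p),
      show A*p*p^(2*r) = A*p^(2*r)*p by ring, neg_mul]
    rw [div_mul_eq_mul_div, div_div, div_mul_div_comm]
    congr 1 <;> ring
  rw [Finset.sum_congr rfl h3, ← Finset.mul_sum, h]
  have f5 : r+N-r = N := by omega
  have f6 : r+N+r = 2*r+N := by omega
  have f7 : 2*(r+N) = 2*r+N+N := by ring
  rw [f5, f6, f7, show A^2*p^2 = (A*p)^2 by ring, qP_sq (A*p),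
    qP_add (-(p*A)) p (2*r+N) N, qP_add (c^2), qP_sq c p r, qP_add (A*p) p (2*r) N]
  have g1 : -(p*A)*p^(2*r+N) = -(p^(N+1)*(A*p^(2*r))) := by ring
  have g2 : c^2*(p^2)^r = (c*p^r)^2 := by ring
  have g3 : A*p*p^(2*r) = A*p^(2*r)*p := by ring
  have g4 : -(A*p) = -(p*A) := by ring
  have m1 := hAm (2*r+N+N)
  rw [qP_add (-(p*A)) p (2*r+N) N, g1] at m1
  have m2 := hcc (r+N)
  rw [qP_add, g2] at m2
  have m3 := hAp (2*r+N)
  rw [qP_add, g3] at m3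
  rw [g1, g2, g3, g4]
  have m1a := left_ne_zero_of_mul m1
  have m1b := right_ne_zero_of_mul m1
  have m2b := right_ne_zero_of_mul m2
  have m3a := left_ne_zero_of_mul m3
  have m3b := right_ne_zero_of_mul m3
  have m4 := hcp r
  have m5 := hcm r
  have m6 := hmp N
  generalize qPoch (-(p ^ (N + 1) * (A * p ^ (2 * r)))) p N = x1 at *
  generalize qPoch ((c * p ^ r) ^ 2) (p ^ 2) N = x2 at *
  generalize qPoch (A * p ^ (2 * r) * p) p N = x3 at *
  generalize qPoch (-(p*A)) p (2*r+N) = x4 at *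
  generalize qPoch (p^2) (p^2) N = x5 at *
  generalize qPoch (A*p) p (2*r) = x6 at *
  generalize qPoch c p r = x7 at *
  generalize qPoch (-c) p r = x8 at *
  generalize qPoch (-(p*A/c)) p r = x9 at *
  generalize wProd c p r = x10 at *
  field_simp

lemma wP_eq (q a B : ℂ) (hB : B ≠ 0) (k : ℕ) :
    a ^ (2 * k) * B ^ (-(k : ℤ)) * q ^ (k ^ 2) = wProd (q * a^2 / B) (q^2) k := by
  induction k with
  | zero => simp [wProd]
  | succ k ih =>
    rw [wP_succ, ← ih]
    rw [zpow_neg, zpow_neg, zpow_natCast, zpow_natCast]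
    field_simp
    ring

/-- Theorem 2.2: base change from `(a², q²)` to `(a⁴, q⁴)`. -/
theorem bailey_base_change_thm22 (q a B : ℂ)
    (hq : q ≠ 0) (ha : a ≠ 0) (hB : B ≠ 0)
    (hq1 : ∀ m : ℕ, 1 ≤ m → q ^ m ≠ 1)
    (ha2 : ∀ m : ℕ, 1 ≤ m → a ^ 2 * q ^ (2 * m) ≠ 1)
    (ha4 : ∀ m : ℕ, 1 ≤ m → a ^ 4 * q ^ (4 * m) ≠ 1)
    (ha2' : ∀ j : ℕ, a ^ 2 * q ^ (2 * j) ≠ -1)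
    (haB : ∀ j : ℕ, a ^ 4 * q ^ (4 * j + 2) ≠ B ^ 2)
    (α β : ℕ → ℂ)
    (hpair : IsBaileyPair (a ^ 2) (q ^ 2) α β) :
    IsBaileyPair (a ^ 4) (q ^ 4)
      (fun r => qPoch (-(B * q)) (q ^ 2) r / qPoch (-(q * a ^ 2 / B)) (q ^ 2) r *
        a ^ (2 * r) * B ^ (-(r : ℤ)) * q ^ (r ^ 2) * α r)
      (fun n => ∑ k ∈ Finset.range (n + 1),
        (qPoch (q * a ^ 2 / B) (q ^ 2) (2 * n - k) * qPoch (-(B * q)) (q ^ 2) k) /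
          (qPoch (-(q ^ 2 * a ^ 2)) (q ^ 2) (2 * n) * qPoch (a ^ 4 * q ^ 2 / B ^ 2) (q ^ 4) n *
            qPoch (q ^ 4) (q ^ 4) (n - k)) *
          a ^ (2 * k) * B ^ (-(k : ℤ)) * q ^ (k ^ 2) * β k) := by
  have hc0 : q * a^2 / B ≠ 0 := by simp [hq, ha, hB]
  have hK := key (q^2) (a^2) (q * a^2 / B) (pow_ne_zero _ hq) hc0
    (fun m hm => by rw [← pow_mul]; exact hq1 _ (by omega))
    (fun m hm => by rw [← pow_mul]; exact ha2 _ hm)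
    (fun m => by rw [← pow_mul]; exact ha2' _)
    (fun j h => by
      apply haB j
      field_simp at h
      rw [← h]; ring)
  have e1 : q^2 * a^2 / (q * a^2 / B) = B * q := by field_simp
  have e2 : (q * a^2 / B)^2 = a^4 * q^2 / B^2 := by field_simp
  have e3 : (q^2)^2 = q^4 := by ring
  have e4 : (a^2)^2 * q^4 = a^4 * q^4 := by ring
  simp only [e1, e2, e3, e4] at hK
  intro n
  have hL : ∀ k ∈ Finset.range (n+1),
      (qPoch (q * a ^ 2 / B) (q ^ 2) (2 * n - k) * qPoch (-(B * q)) (q ^ 2) k) /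
          (qPoch (-(q ^ 2 * a ^ 2)) (q ^ 2) (2 * n) * qPoch (a ^ 4 * q ^ 2 / B ^ 2) (q ^ 4) n *
            qPoch (q ^ 4) (q ^ 4) (n - k)) *
          a ^ (2 * k) * B ^ (-(k : ℤ)) * q ^ (k ^ 2) * β k
      = ∑ r ∈ Finset.range (k+1), α r * (
      (qPoch (q * a ^ 2 / B) (q ^ 2) (2 * n - k) * qPoch (-(B * q)) (q ^ 2) k) /
          (qPoch (-(q ^ 2 * a ^ 2)) (q ^ 2) (2 * n) * qPoch (a ^ 4 * q ^ 2 / B ^ 2) (q ^ 4) n *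
            qPoch (q ^ 4) (q ^ 4) (n - k)) * wProd (q * a^2 / B) (q^2) k /
            (qPoch (q^2) (q^2) (k - r) * qPoch (a^2 * q^2) (q^2) (k + r))) := by
    intro k _
    rw [hpair k, ← wP_eq q a B hB, Finset.mul_sum]
    refine Finset.sum_congr rfl fun r _ => ?_
    ring
  simp only
  rw [Finset.sum_congr rfl hL, Finset.sum_comm' (t' := Finset.range (n+1))
    (s' := fun r => Finset.Ico r (n+1)) (by intro x y; simp; omega)]
  refine Finset.sum_congr rfl fun r hr => ?_
  rw [Finset.mem_range] at hr
  obtain ⟨N, rfl⟩ : ∃ N, n = r + N := ⟨n - r, by omega⟩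
  rw [← Finset.mul_sum, Finset.sum_Ico_eq_sum_range, show r + N + 1 - r = N + 1 by omega,
    hK N r, ← wP_eq q a B hB]
  ring
end

section
/- Let q, w be nonzero complex numbers with q^m ≠ 1 for all m ≥ 1. Suppose (α_n, β_n) is a Bailey pair with parameters (1, q) in which α_0 = 1 and α_n = (-1)^n w^{n^2} (w^n q^{-n} + w^{-n} q^{n}) for n > 0 (when w = q^A this is α_n = q^{A n^2}(q^{(A-1)n} + q^{-(A-1)n})(-1)^n). Define β'_n = q^n β_n, α'_0 = 1, and α'_n = (-1)^n w^{n^2} (w^n + w^{-n}) for n > 0. Then (α'_n, β'_n) is a Bailey pair with parameters (1, q). -/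
theorem qPoch_succ_aux (q : ℂ) (n : ℕ) : qPoch q q (n + 1) = qPoch q q n * (1 - q ^ (n + 1)) := by
  unfold qPoch
  rw [Finset.prod_range_succ, pow_succ' q n]

theorem qPoch_ne_zero_aux (q : ℂ) (hq1 : ∀ m : ℕ, 1 ≤ m → q ^ m ≠ 1) (n : ℕ) :
    qPoch q q n ≠ 0 := by
  unfold qPoch
  rw [Finset.prod_ne_zero_iff]
  intro j _ h
  apply hq1 (j + 1) (by omega)
  rw [pow_succ']
  linear_combination -h

/-- Proposition 4.1, stated with `w = q^A`. -/
theorem bailey_linear_insertion (q w : ℂ) (hq : q ≠ 0) (hw : w ≠ 0)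
    (hq1 : ∀ m : ℕ, 1 ≤ m → q ^ m ≠ 1)
    (α β : ℕ → ℂ)
    (hpair : IsBaileyPair 1 q α β)
    (hα0 : α 0 = 1)
    (hα : ∀ n : ℕ, 0 < n →
      α n = (-1) ^ n * w ^ (n ^ 2) * (w ^ n * q ^ (-(n : ℤ)) + w ^ (-(n : ℤ)) * q ^ n)) :
    IsBaileyPair 1 q
      (fun n => if n = 0 then 1 else (-1) ^ n * w ^ (n ^ 2) * (w ^ n + w ^ (-(n : ℤ))))
      (fun n => q ^ n * β n) := by
  have hP := qPoch_ne_zero_aux q hq1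
  intro n
  have key : ∀ k : ℕ, k ≤ n →
      ∑ r ∈ Finset.range (k + 1),
        ((if r = 0 then 1 else (-1) ^ r * w ^ (r ^ 2) * (w ^ r + w ^ (-(r : ℤ)))) - q ^ n * α r)
          / (qPoch q q (n - r) * qPoch q q (n + r))
      = (-1) ^ k * w ^ (k ^ 2 + k) * (1 - q ^ (n - k))
          / (qPoch q q (n - k) * qPoch q q (n + k)) := by
    intro k
    induction k with
    | zero => intro _; simp [hα0]
    | succ k ih =>
      intro hk
      rw [Finset.sum_range_succ, ih (by omega), if_neg (by omega), hα (k + 1) (by omega)]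
      obtain ⟨m, rfl⟩ := Nat.exists_eq_add_of_le hk
      have e1 : k + 1 + m - k = m + 1 := by omega
      have e2 : k + 1 + m - (k + 1) = m := by omega
      have e3 : k + 1 + m + (k + 1) = (k + 1 + m + k) + 1 := by omega
      rw [e1, e2, e3, qPoch_succ_aux q m, qPoch_succ_aux q (k + 1 + m + k)]
      have h1 := hP m
      have h2 := hP (k + 1 + m + k)
      have h3 : 1 - q ^ (m + 1) ≠ 0 := sub_ne_zero.mpr (hq1 (m + 1) (by omega)).symm
      have h4 : 1 - q ^ (k + 1 + m + k + 1) ≠ 0 :=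
        sub_ne_zero.mpr (hq1 _ (by omega)).symm
      generalize qPoch q q m = A at *
      generalize qPoch q q (k + 1 + m + k) = B at *
      have hA : (-1) ^ k * w ^ (k ^ 2 + k) * (1 - q ^ (m + 1))
          / (A * (1 - q ^ (m + 1)) * B)
          = (-1) ^ k * w ^ (k ^ 2 + k) * (1 - q ^ (k + 1 + m + k + 1))
            / (A * (B * (1 - q ^ (k + 1 + m + k + 1)))) := by
        rw [div_eq_div_iff (mul_ne_zero (mul_ne_zero h1 h3) h2) (mul_ne_zero h1 (mul_ne_zero h2 h4))]
        ring
      rw [hA, ← add_div]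
      congr 1
      rw [zpow_neg, zpow_neg, zpow_natCast, zpow_natCast]
      have hwk : w ^ ((k + 1) ^ 2) * (w ^ (k + 1))⁻¹ = w ^ (k ^ 2 + k) := by
        field_simp
        ring
      have hqk : q ^ (k + 1 + m) * (q ^ (k + 1))⁻¹ = q ^ m := by
        field_simp
        ring
      have hw2 : w ^ ((k + 1) ^ 2 + (k + 1)) = w ^ ((k + 1) ^ 2) * w ^ (k + 1) := pow_add _ _ _
      have hq2 : q ^ (k + 1 + m + k + 1) = q ^ (k + 1 + m) * q ^ (k + 1) := by ring
      rw [hw2, hq2, ← hwk, ← hqk]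
      generalize w ^ ((k + 1) ^ 2) = a
      generalize (w ^ (k + 1))⁻¹ = b
      generalize (q ^ (k + 1))⁻¹ = c
      rw [pow_succ (-1 : ℂ) k]
      generalize w ^ (k + 1) = d
      ring
  have h := key n le_rfl
  simp only [Nat.sub_self, pow_zero, sub_self, mul_zero, zero_div, sub_div,
    Finset.sum_sub_distrib] at h
  have hb := hpair n
  simp only [one_mul] at hb ⊢
  rw [hb, Finset.mul_sum]
  simp only [← mul_div_assoc]
  exact (sub_eq_zero.mp h).symm
end

section
/- For every integer n ≥ 0 and all nonzero complex numbers q and w, ∑_{s=-n}^{n} [2n choose n-s]_q · w^{s^2 - s} · (-1)^s = q^n · ∑_{s=-n}^{n} [2n choose n-s]_q · w^{s^2 - s} · (-q)^s, where [m choose j]_q denotes the Gaussian (q-binomial) coefficient. -/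
/-- The Gaussian (q-binomial) coefficient `[m choose j]_q`, defined for every complex `q`
via the q-Pascal recurrence `[m+1, j+1]_q = [m, j]_q + q^{j+1} [m, j+1]_q`, so that it
agrees with the polynomial `∏_{i=1}^{j} (1 - q^{m-j+i})/(1 - q^i)` evaluated at `q`. -/
noncomputable def qbin (q : ℂ) : ℕ → ℕ → ℂ
  | _, 0 => 1
  | 0, _ + 1 => 0
  | m + 1, j + 1 => qbin q m j + q ^ (j + 1) * qbin q m (j + 1)

theorem qbin_zero_right (q : ℂ) (m : ℕ) : qbin q m 0 = 1 := by
  cases m <;> simp [qbin]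

theorem qbin_succ (q : ℂ) (m j : ℕ) :
    qbin q (m + 1) (j + 1) = qbin q m j + q ^ (j + 1) * qbin q m (j + 1) := by
  rw [qbin]

theorem qbin_of_lt (q : ℂ) (m : ℕ) : ∀ j, m < j → qbin q m j = 0 := by
  induction m with
  | zero =>
    intro j hj
    obtain ⟨k, rfl⟩ : ∃ k, j = k + 1 := ⟨j - 1, by omega⟩
    rw [qbin]
  | succ m ih =>
    intro j hj
    obtain ⟨k, rfl⟩ : ∃ k, j = k + 1 := ⟨j - 1, by omega⟩
    rw [qbin_succ, ih k (by omega), ih (k + 1) (by omega)]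
    ring

theorem qbin_ratio (q : ℂ) (m : ℕ) : ∀ j a, j + a = m →
    qbin q m j * (1 - q ^ a) = qbin q m (j + 1) * (1 - q ^ (j + 1)) := by
  induction m with
  | zero =>
    intro j a h
    obtain ⟨rfl, rfl⟩ : j = 0 ∧ a = 0 := by omega
    simp [qbin]
  | succ m ih =>
    intro j a h
    rcases j with _ | j
    · have h1 := ih 0 m (by omega)
      obtain rfl : a = m + 1 := by omega
      rw [qbin_succ, qbin_zero_right, qbin_zero_right]
      rw [qbin_zero_right] at h1
      linear_combination q * h1
    · rcases a with _ | a
      · rw [qbin_of_lt q (m + 1) (j + 1 + 1) (by omega)]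
        simp
      · have h1 := ih j (a + 1) (by omega)
        have h2 := ih (j + 1) a (by omega)
        rw [qbin_succ, qbin_succ]
        linear_combination h1 + q ^ (j + 2) * h2

theorem qbin_symm (q : ℂ) (m : ℕ) : ∀ j a, j + a = m → qbin q m j = qbin q m a := by
  induction m with
  | zero =>
    intro j a h
    obtain ⟨rfl, rfl⟩ : j = 0 ∧ a = 0 := by omega
    rfl
  | succ m ih =>
    have key : ∀ k, qbin q k k = 1 := by
      intro k
      induction k with
      | zero => simp [qbin]
      | succ k ihk => rw [qbin_succ, ihk, qbin_of_lt q k (k + 1) (by omega)]; ring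
    intro j a h
    rcases j with _ | j
    · obtain rfl : a = m + 1 := by omega
      rw [qbin_zero_right, key]
    · rcases a with _ | a
      · obtain rfl : j = m := by omega
        rw [qbin_zero_right, key]
      · have h1 := ih j (a + 1) (by omega)
        have h2 := ih (j + 1) a (by omega)
        have h3 := qbin_ratio q m a (j + 1) (by omega)
        rw [qbin_succ, qbin_succ, h1, h2]
        linear_combination -h3

/-- The identity behind Proposition 4.1:
`∑_{s=-n}^n [2n choose n-s]_q w^{s²-s} (-1)^s = qⁿ ∑_{s=-n}^n [2n choose n-s]_q w^{s²-s} (-q)^s`. -/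
theorem qbinomial_sum_identity (n : ℕ) (q w : ℂ) (hq : q ≠ 0) (hw : w ≠ 0) :
    ∑ s ∈ Finset.Icc (-(n : ℤ)) (n : ℤ),
        qbin q (2 * n) ((n : ℤ) - s).toNat * w ^ (s ^ 2 - s) * (-1 : ℂ) ^ s =
      q ^ n * ∑ s ∈ Finset.Icc (-(n : ℤ)) (n : ℤ),
        qbin q (2 * n) ((n : ℤ) - s).toNat * w ^ (s ^ 2 - s) * (-q) ^ s := by
  rw [← sub_eq_zero, Finset.mul_sum, ← Finset.sum_sub_distrib]
  have hsub : Finset.Icc (1 - (n : ℤ)) n ⊆ Finset.Icc (-(n : ℤ)) n :=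
    Finset.Icc_subset_Icc (by omega) le_rfl
  have hterm : ∀ s ∈ Finset.Icc (-(n : ℤ)) n,
      qbin q (2 * n) ((n : ℤ) - s).toNat * w ^ (s ^ 2 - s) * (-1 : ℂ) ^ s -
        q ^ n * (qbin q (2 * n) ((n : ℤ) - s).toNat * w ^ (s ^ 2 - s) * (-q) ^ s) =
      w ^ (s ^ 2 - s) * (-1 : ℂ) ^ s *
        (qbin q (2 * n) ((n : ℤ) - s).toNat * (1 - q ^ ((n : ℤ) + s).toNat)) := by
    intro s hs
    rw [Finset.mem_Icc] at hs
    have e1 : (q : ℂ) ^ ((n : ℤ) + s).toNat = q ^ n * q ^ s := by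
      rw [← zpow_natCast, Int.toNat_of_nonneg (by omega), zpow_add₀ hq, zpow_natCast]
    have e2 : (-q) ^ s = (-1 : ℂ) ^ s * q ^ s := by
      rw [← mul_zpow, neg_one_mul]
    rw [e1, e2]
    ring
  rw [Finset.sum_congr rfl hterm, ← Finset.sum_subset hsub]
  · refine Finset.sum_involution (fun s _ => 1 - s) ?_ ?_ ?_ ?_
    · intro s hs
      rw [Finset.mem_Icc] at hs
      have hw2 : (1 - s) ^ 2 - (1 - s) = s ^ 2 - s := by ring
      have hm : (-1 : ℂ) ^ (1 - s) = -(-1 : ℂ) ^ s := by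
        rw [zpow_sub₀ (by norm_num), zpow_one, div_eq_mul_inv, ← inv_zpow]
        norm_num
      have h1 := qbin_ratio q (2 * n) ((n : ℤ) - s).toNat ((n : ℤ) + s).toNat (by omega)
      have h2 := qbin_symm q (2 * n) (((n : ℤ) - s).toNat + 1) ((n : ℤ) - (1 - s)).toNat
        (by omega)
      have h3 : ((n : ℤ) + (1 - s)).toNat = ((n : ℤ) - s).toNat + 1 := by omega
      simp only [hw2, hm, h3]
      rw [h1, h2]
      ring
    · intro s _ _ h
      omega
    · intro s hs
      rw [Finset.mem_Icc] at hs ⊢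
      omega
    · intro s _
      ring
  · intro s hs hs'
    rw [Finset.mem_Icc] at hs hs'
    have : ((n : ℤ) + s).toNat = 0 := by omega
    rw [this]
    simp
end

section
/- (Andrews–Gordon identities.) Let q be a complex number with 0 < |q| < 1, and let k ≥ 2 and 0 ≤ i ≤ k-1 be integers. Then ∑_{s_1 ≥ s_2 ≥ ⋯ ≥ s_{k-1} ≥ 0} q^{s_1^2 + ⋯ + s_{k-1}^2 + s_{k-i} + ⋯ + s_{k-1}} / [(q;q)_{s_1-s_2} (q;q)_{s_2-s_3} ⋯ (q;q)_{s_{k-2}-s_{k-1}} (q;q)_{s_{k-1}}] = (q^{2k+1}, q^{k-i}, q^{k+i+1}; q^{2k+1})_∞ / (q;q)_∞, where the linear term s_{k-i} + ⋯ + s_{k-1} is empty (equal to 0) when i = 0. -/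
/-- The infinite q-Pochhammer symbol `(x;q)_∞ = ∏_{j=0}^{∞} (1 - x q^j)`. -/
noncomputable def qPochInf (x q : ℂ) : ℂ := ∏' j : ℕ, (1 - x * q ^ j)

open Filter Topology

namespace AG

/-- Reciprocal of `(q;q)_m`, extended by zero to negative integers. -/
noncomputable def rq (q : ℂ) (m : ℤ) : ℂ := if m < 0 then 0 else (qPoch q q m.toNat)⁻¹

lemma rq_neg (q : ℂ) {m : ℤ} (h : m < 0) : rq q m = 0 := by simp [rq, h]

lemma rq_nat (q : ℂ) (m : ℕ) : rq q (m : ℤ) = (qPoch q q m)⁻¹ := by simp [rq]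

lemma rq_zero (q : ℂ) : rq q 0 = 1 := by simp [rq, qPoch]

lemma one_sub_pow_ne {q : ℂ} (h1 : ‖q‖ < 1) (n : ℕ) : 1 - q ^ (n + 1) ≠ 0 := by
  intro h
  have h2 : q ^ (n + 1) = 1 := (sub_eq_zero.mp h).symm
  have h3 : ‖q‖ ^ (n + 1) = 1 := by rw [← norm_pow, h2, norm_one]
  have := pow_lt_one₀ (norm_nonneg q) h1 (Nat.succ_ne_zero n)
  simp only [Nat.succ_eq_add_one] at this
  linarith

lemma qPoch_succ (q : ℂ) (n : ℕ) : qPoch q q (n + 1) = qPoch q q n * (1 - q ^ (n + 1)) := by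
  simp only [qPoch, Finset.prod_range_succ]
  congr 2
  ring

lemma qPoch_ne {q : ℂ} (h1 : ‖q‖ < 1) (n : ℕ) : qPoch q q n ≠ 0 := by
  induction n with
  | zero => simp [qPoch]
  | succ n ih => rw [qPoch_succ]; exact mul_ne_zero ih (one_sub_pow_ne h1 n)

lemma rq_step {q : ℂ} (h1 : ‖q‖ < 1) (m : ℤ) : (1 - q ^ m) * rq q m = rq q (m - 1) := by
  rcases lt_trichotomy m 0 with h | h | h
  · rw [rq_neg q h, rq_neg q (by omega)]; ring
  · subst h; rw [rq_neg q (by omega : (0 : ℤ) - 1 < 0)]; simp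
  · obtain ⟨n, rfl⟩ : ∃ n : ℕ, m = ((n + 1 : ℕ) : ℤ) := ⟨(m - 1).toNat, by omega⟩
    have : (((n + 1 : ℕ) : ℤ) - 1) = (n : ℤ) := by push_cast; ring
    rw [this, rq_nat, rq_nat, qPoch_succ, zpow_natCast]
    have := qPoch_ne h1 n
    have := one_sub_pow_ne h1 n
    field_simp

lemma vand {q : ℂ} (hq : q ≠ 0) (h1 : ‖q‖ < 1) (m : ℕ) : ∀ c : ℕ,
    ∑ u ∈ Finset.range (m + 1), q ^ ((u : ℤ) ^ 2 + c * u) *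
      (rq q ((m : ℤ) - u) * rq q u * rq q ((u : ℤ) + c)) = rq q m * rq q ((m : ℤ) + c) := by
  induction m with
  | zero => intro c; simp [rq_zero]
  | succ m ih =>
    intro c
    have hne := one_sub_pow_ne h1 m
    apply mul_left_cancel₀ hne
    have key : ∀ u : ℕ, (1 - q ^ (m + 1)) * (q ^ ((u : ℤ) ^ 2 + c * u) *
        (rq q (((m + 1 : ℕ) : ℤ) - u) * rq q u * rq q ((u : ℤ) + c))) =
        q ^ ((u : ℤ) ^ 2 + c * u) * (rq q ((m : ℤ) - u) * rq q u * rq q ((u : ℤ) + c)) +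
        q ^ ((u : ℤ) ^ 2 + c * u + (m + 1) - u) *
          (rq q (((m + 1 : ℕ) : ℤ) - u) * rq q ((u : ℤ) - 1) * rq q ((u : ℤ) + c)) := by
      intro u
      have e1 := rq_step h1 (((m + 1 : ℕ) : ℤ) - u)
      have e2 := rq_step h1 (u : ℤ)
      rw [show ((m + 1 : ℕ) : ℤ) - u - 1 = (m : ℤ) - u by push_cast; ring] at e1
      rw [← e1, ← e2, show (u : ℤ) ^ 2 + c * u + (m + 1) - u =
        ((u : ℤ) ^ 2 + c * u) + (((m + 1 : ℕ) : ℤ) - u) by push_cast; ring,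
        zpow_add₀ hq ((u : ℤ) ^ 2 + c * u)]
      have : q ^ (m + 1) = q ^ (((m + 1 : ℕ) : ℤ) - u) * q ^ (u : ℤ) := by
        rw [← zpow_add₀ hq, sub_add_cancel, zpow_natCast]
      rw [this]
      generalize q ^ ((u : ℤ) ^ 2 + c * u) = a
      generalize q ^ (((m + 1 : ℕ) : ℤ) - u) = b
      ring
    rw [Finset.mul_sum, Finset.sum_congr rfl (fun u _ => key u), Finset.sum_add_distrib,
      Finset.sum_range_succ, ih c, Finset.sum_range_succ', rq_neg q (by push_cast; omega : (m : ℤ) - ((m + 1 : ℕ) : ℤ) < 0),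
      rq_neg q (by simp : ((0 : ℕ) : ℤ) - 1 < 0)]
    have e3 : ∀ u : ℕ, q ^ (((u + 1 : ℕ) : ℤ) ^ 2 + c * ((u + 1 : ℕ) : ℤ) + (m + 1) - ((u + 1 : ℕ) : ℤ)) *
        (rq q (((m + 1 : ℕ) : ℤ) - ((u + 1 : ℕ) : ℤ)) * rq q (((u + 1 : ℕ) : ℤ) - 1) *
          rq q (((u + 1 : ℕ) : ℤ) + c)) = q ^ ((c : ℤ) + m + 1) *
          (q ^ ((u : ℤ) ^ 2 + (c + 1 : ℕ) * u) *
      (rq q ((m : ℤ) - u) * rq q u * rq q ((u : ℤ) + (c + 1 : ℕ)))) := by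
      intro u
      rw [← mul_assoc (q ^ ((c : ℤ) + m + 1)), ← zpow_add₀ hq]
      congr 1
      · congr 1; push_cast; ring
      · congr 1
        · congr 1 <;> congr 1 <;> push_cast <;> ring
        · congr 1; push_cast; ring
    rw [Finset.sum_congr rfl (fun u _ => e3 u), ← Finset.mul_sum, ih (c + 1)]
    have e4 := rq_step h1 ((m + 1 : ℕ) : ℤ)
    have e5 := rq_step h1 ((m : ℤ) + (c + 1 : ℕ))
    rw [show ((m + 1 : ℕ) : ℤ) - 1 = m by push_cast; ring, zpow_natCast] at e4
    rw [show (m : ℤ) + (c + 1 : ℕ) - 1 = m + c by push_cast; ring] at e5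
    rw [show ((m + 1 : ℕ) : ℤ) + c = (m : ℤ) + (c + 1 : ℕ) by push_cast; ring, ← mul_assoc (1 - q ^ (m + 1)), e4, ← e5,
      show (c : ℤ) + m + 1 = (m : ℤ) + (c + 1 : ℕ) by push_cast; ring]
    ring

/-- The Bailey kernel. -/
noncomputable def K (q : ℂ) (e n r : ℤ) : ℂ := rq q (n - r) * rq q (n + r + e)

lemma K_symm (q : ℂ) (e n r : ℤ) : K q e n (-e - r) = K q e n r := by
  unfold K
  rw [mul_comm]
  congr 2 <;> ring

lemma K_zero (q : ℂ) (e : ℤ) (n r : ℤ) (h : n < r ∨ n + r + e < 0) : K q e n r = 0 := by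
  unfold K
  rcases h with h | h
  · rw [rq_neg q (by omega)]; simp
  · rw [rq_neg q h]; simp

lemma bailey_nonneg {q : ℂ} (hq : q ≠ 0) (h1 : ‖q‖ < 1) (e n r : ℕ) :
    ∑ s ∈ Finset.range (n + 1), q ^ ((s : ℤ) ^ 2 + e * s) * rq q ((n : ℤ) - s) * K q e s r =
      q ^ ((r : ℤ) ^ 2 + e * r) * K q e n r := by
  by_cases hr : r ≤ n
  · obtain ⟨m, rfl⟩ := Nat.exists_eq_add_of_le hr
    rw [add_assoc, Finset.sum_range_add, Finset.sum_eq_zero, zero_add]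
    · have := vand hq h1 m (2 * r + e)
      have e1 : K q e ((r + m : ℕ) : ℤ) r = rq q m * rq q ((m : ℤ) + (2 * r + e : ℕ)) := by
        unfold K
        congr 2 <;> push_cast <;> ring
      rw [e1, ← this, Finset.mul_sum]
      apply Finset.sum_congr rfl
      intro u _
      unfold K
      rw [← mul_assoc (q ^ _), ← zpow_add₀ hq, mul_assoc (q ^ _), mul_assoc (rq q _)]
      congr 1
      · congr 1; push_cast; ring
      · congr 1
        · congr 1; push_cast; ring
        · congr 1 <;> congr 1 <;> push_cast <;> ring
    · intro s hs
      rw [Finset.mem_range] at hs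
      rw [K_zero q e s r (by left; omega), mul_zero]
  · rw [K_zero q e n r (by left; omega), mul_zero]
    apply Finset.sum_eq_zero
    intro s hs
    rw [Finset.mem_range] at hs
    rw [K_zero q e s r (by left; omega), mul_zero]

lemma bailey {q : ℂ} (hq : q ≠ 0) (h1 : ‖q‖ < 1) (e n : ℕ) (he : e ≤ 1) (r : ℤ) :
    ∑ s ∈ Finset.range (n + 1), q ^ ((s : ℤ) ^ 2 + e * s) * rq q ((n : ℤ) - s) * K q e s r =
      q ^ (r ^ 2 + e * r) * K q e n r := by
  rcases le_or_gt 0 r with h | h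
  · obtain ⟨m, rfl⟩ := Int.eq_ofNat_of_zero_le h
    exact bailey_nonneg hq h1 e n m
  · obtain ⟨m, hm⟩ := Int.eq_ofNat_of_zero_le (show (0 : ℤ) ≤ -e - r by omega)
    have := bailey_nonneg hq h1 e n m
    rw [← hm] at this
    simp only [K_symm] at this
    rw [this]
    congr 2
    ring

lemma fin_supp (q : ℂ) (e : ℤ) (n : ℤ) (f : ℤ → ℂ) : Summable (fun r => f r * K q e n r) := by
  apply summable_of_hasFiniteSupport
  apply Set.Finite.subset (Set.finite_Icc (-n - e) n)
  intro r hr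
  simp only [Function.mem_support] at hr
  by_contra hc
  apply hr
  rw [K_zero, mul_zero]
  rw [Set.mem_Icc] at hc
  omega

/-- One step in the Bailey chain. -/
lemma chain {q : ℂ} (hq : q ≠ 0) (h1 : ‖q‖ < 1) (e : ℕ) (he : e ≤ 1) (α : ℤ → ℂ) (β : ℕ → ℂ)
    (h : ∀ n : ℕ, β n = ∑' r, α r * K q e n r) (n : ℕ) :
    ∑ s ∈ Finset.range (n + 1), q ^ ((s : ℤ) ^ 2 + e * s) * rq q ((n : ℤ) - s) * β s =
      ∑' r, (α r * q ^ (r ^ 2 + e * r)) * K q e n r := by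
  simp_rw [h, ← tsum_mul_left]
  rw [← Summable.tsum_finsetSum]
  · congr 1
    ext r
    rw [mul_assoc, ← bailey hq h1 e n he, Finset.mul_sum]
    apply Finset.sum_congr rfl
    intros; ring
  · intro s _
    exact (fin_supp q e s α).mul_left _

/-- `(-1)^r q^(r(r-1)/2)` -/
noncomputable def cc (q : ℂ) (r : ℤ) : ℂ := (-1) ^ r * q ^ (r * (r - 1) / 2)

lemma tri (r : ℤ) : 2 * (r * (r - 1) / 2) = r * (r - 1) := by
  have : (2 : ℤ) ∣ r * (r - 1) := by
    have := Int.even_mul_pred_self r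
    exact this.two_dvd
  omega

lemma cc_succ {q : ℂ} (hq : q ≠ 0) (r : ℤ) : cc q (r + 1) = - cc q r * q ^ r := by
  unfold cc
  have : (r + 1) * (r + 1 - 1) / 2 = r * (r - 1) / 2 + r := by
    have a := tri r
    have b := tri (r + 1)
    linarith
  rw [this, zpow_add₀ hq, zpow_add₀ (by norm_num : (-1 : ℂ) ≠ 0)]
  simp only [zpow_one]
  ring

lemma cc_neg {q : ℂ} (hq : q ≠ 0) (r : ℤ) : cc q (-r) = cc q r * q ^ r := by
  unfold cc
  have : (-r) * (-r - 1) / 2 = r * (r - 1) / 2 + r := by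
    have a := tri r
    have b := tri (-r)
    linarith
  rw [this, zpow_add₀ hq]
  have : (-1 : ℂ) ^ (-r) = (-1) ^ r := by
    rw [zpow_neg, ← inv_zpow]; norm_num
  rw [this]
  ring

lemma cc_refl {q : ℂ} (hq : q ≠ 0) (r : ℤ) : cc q (1 - r) = - cc q r := by
  have h := cc_succ hq (-r)
  rw [show -r + 1 = 1 - r by ring, cc_neg hq] at h
  rw [h, neg_mul, mul_assoc, ← zpow_add₀ hq]
  simp

/-- Switching from parameter `q` to parameter `1`. -/
lemma switch {q : ℂ} (hq : q ≠ 0) (h1 : ‖q‖ < 1) (A n : ℕ) :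
    ∑' r : ℤ, (cc q r * q ^ ((A : ℤ) * (r ^ 2 + r))) * K q 1 n r =
    ∑' r : ℤ, (cc q r * q ^ ((A : ℤ) * (r ^ 2 + r))) * K q 0 n r := by
  have hK : ∀ r : ℤ, K q 0 n r = K q 1 n r - q ^ (n : ℤ) * q * (q ^ r * K q 1 n r) := by
    intro r
    unfold K
    have := rq_step h1 ((n : ℤ) + r + 1)
    rw [add_sub_cancel_right] at this
    rw [add_zero, ← this, zpow_add₀ hq, zpow_add₀ hq, zpow_one]
    ring
  have hz : ∑' r : ℤ, (cc q r * q ^ ((A : ℤ) * (r ^ 2 + r)) * q ^ r) * K q 1 n r = 0 := by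
    rw [← self_eq_neg, ← tsum_neg, ← Equiv.tsum_eq (Equiv.subLeft (-1 : ℤ))]
    congr 1
    ext r
    simp only [Equiv.subLeft_apply]
    rw [K_symm, show (-1 - r : ℤ) = - (r + 1) by ring, cc_neg hq, cc_succ hq, zpow_neg, zpow_add₀ hq r 1,
      show (A : ℤ) * ((-(r + 1)) ^ 2 + -(r + 1)) = A * (r ^ 2 + r) by ring]
    have : q ^ r ≠ 0 := zpow_ne_zero _ hq
    field_simp
  have : ∀ r : ℤ, (cc q r * q ^ ((A : ℤ) * (r ^ 2 + r))) * K q 0 n r =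
     (cc q r * q ^ ((A : ℤ) * (r ^ 2 + r))) * K q 1 n r -
      q ^ (n : ℤ) * q * ((cc q r * q ^ ((A : ℤ) * (r ^ 2 + r)) * q ^ r) * K q 1 n r) := by
    intro r; rw [hK]; ring
  simp_rw [this]
  rw [Summable.tsum_sub (fin_supp ..) ((fin_supp ..).mul_left _), tsum_mul_left, hz]
  simp

lemma delta {q : ℂ} (hq : q ≠ 0) (h1 : ‖q‖ < 1) (n : ℕ) :
    (if n = 0 then 1 else 0 : ℂ) = ∑' r : ℤ, cc q r * K q 0 n r := by
  split_ifs with hn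
  · subst hn
    rw [tsum_eq_single 0]
    · simp [cc, K, rq_zero]
    · intro r hr
      rw [K_zero, mul_zero]
      simp; omega
  · have hz : ∑' r : ℤ, cc q r * K q (-1) n r = 0 := by
      rw [← self_eq_neg, ← tsum_neg, ← Equiv.tsum_eq (Equiv.subLeft (1 : ℤ))]
      congr 1
      ext r
      simp only [Equiv.subLeft_apply]
      rw [show (1 - r : ℤ) = - (-1) - r by ring, K_symm, show - (-1) - r = (1 - r : ℤ) by ring, cc_refl hq]
      ring
    have hr : ∑' r : ℤ, (cc q r * q ^ r) * K q 0 n r = ∑' r : ℤ, cc q r * K q 0 n r := by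
      rw [← Equiv.tsum_eq (Equiv.neg ℤ)]
      congr 1
      ext r
      simp only [Equiv.neg_apply]
      rw [cc_neg hq, mul_assoc (cc q r), ← zpow_add₀ hq, ← K_symm]
      simp
    have hK : ∀ r : ℤ, cc q r * K q (-1) n r = cc q r * K q 0 n r -
        q ^ n * ((cc q r * q ^ r) * K q 0 n r) := by
      intro r
      unfold K
      have := rq_step h1 ((n : ℤ) + r)
      rw [show (n : ℤ) + r + -1 = n + r - 1 by ring, ← this, zpow_add₀ hq, zpow_natCast, add_zero]
      ring
    simp_rw [hK] at hz
    rw [Summable.tsum_sub (fin_supp ..) ((fin_supp ..).mul_left _), tsum_mul_left, hr] at hz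
    obtain ⟨m, rfl⟩ := Nat.exists_eq_succ_of_ne_zero hn
    have := one_sub_pow_ne h1 m
    have h2 : (1 - q ^ (m + 1)) * ∑' r : ℤ, cc q r * K q 0 (m + 1 : ℕ) r = 0 := by
      rw [← hz]; simp only [Nat.succ_eq_add_one]; ring
    exact ((mul_eq_zero.mp h2).resolve_left this).symm

lemma summ_geo {q : ℂ} (x : ℂ) (h1 : ‖q‖ < 1) : Summable (fun j : ℕ => ‖-(x * q ^ j)‖) := by
  simp only [norm_neg, norm_mul, norm_pow]
  exact (summable_geometric_of_lt_one (norm_nonneg q) h1).mul_left _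

lemma qPoch_tendsto {q : ℂ} (x : ℂ) (h1 : ‖q‖ < 1) :
    Tendsto (fun n => qPoch x q n) atTop (𝓝 (qPochInf x q)) := by
  have := multipliable_one_add_of_summable (summ_geo x h1)
  simp only [← sub_eq_add_neg] at this
  exact this.tendsto_prod_tprod_nat

lemma qPochInf_ne {q : ℂ} (h1 : ‖q‖ < 1) : qPochInf q q ≠ 0 := by
  have := tprod_one_add_ne_zero_of_summable (f := fun j : ℕ => -(q * q ^ j)) ?_ (summ_geo q h1)
  · unfold qPochInf
    simpa only [← sub_eq_add_neg] using this
  · intro j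
    have := one_sub_pow_ne h1 j
    rw [pow_succ'] at this
    simpa only [← sub_eq_add_neg] using this

lemma rq_tendsto {q : ℂ} (h1 : ‖q‖ < 1) :
    Tendsto (fun n : ℕ => rq q n) atTop (𝓝 (qPochInf q q)⁻¹) := by
  simp only [rq_nat]
  exact (qPoch_tendsto q h1).inv₀ (qPochInf_ne h1)

lemma rq_tendsto_shift {q : ℂ} (h1 : ‖q‖ < 1) (r : ℤ) :
    Tendsto (fun n : ℕ => rq q (n + r)) atTop (𝓝 (qPochInf q q)⁻¹) := by
  have ht : Tendsto (fun n : ℕ => ((n : ℤ) + r).toNat) atTop atTop := by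
    rw [tendsto_atTop]
    intro b
    filter_upwards [eventually_ge_atTop (b + r.natAbs)] with n hn
    omega
  refine ((rq_tendsto h1).comp ht).congr' ?_
  filter_upwards [eventually_ge_atTop r.natAbs] with n hn
  simp only [Function.comp]
  congr 1
  omega

lemma rq_bdd {q : ℂ} (h1 : ‖q‖ < 1) : ∃ C : ℝ, 0 ≤ C ∧ ∀ m, ‖rq q m‖ ≤ C := by
  obtain ⟨C, hC⟩ := (rq_tendsto h1).norm.bddAbove_range
  have hC' : ∀ n : ℕ, ‖rq q n‖ ≤ C := fun n => hC ⟨n, rfl⟩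
  have h0 : 0 ≤ C := (norm_nonneg _).trans (hC' 0)
  refine ⟨C, h0, fun m => ?_⟩
  rcases lt_or_ge m 0 with h | h
  · rw [rq_neg q h]; simpa
  · obtain ⟨n, rfl⟩ := Int.eq_ofNat_of_zero_le h
    exact hC' n

lemma K_sum_tendsto {q : ℂ} (h1 : ‖q‖ < 1) (α : ℤ → ℂ) (hα : Summable (fun r => ‖α r‖)) :
    Tendsto (fun n : ℕ => ∑' r, α r * K q 0 n r) atTop
      (𝓝 ((∑' r, α r) * ((qPochInf q q)⁻¹ * (qPochInf q q)⁻¹))) := by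
  obtain ⟨C, hC0, hC⟩ := rq_bdd h1
  rw [← tsum_mul_right]
  apply tendsto_tsum_of_dominated_convergence (bound := fun r => ‖α r‖ * (C * C))
  · exact hα.mul_right _
  · intro r
    apply Tendsto.const_mul
    unfold K
    simp only [add_zero]
    exact (rq_tendsto_shift h1 (-r)).mul (rq_tendsto_shift h1 r)
  · refine Eventually.of_forall fun n r => ?_
    rw [norm_mul, K, norm_mul]
    gcongr <;> apply hC

lemma jtp_fin {Q z : ℂ} (hQ : Q ≠ 0) (h1 : ‖Q‖ < 1) (hz : z ≠ 0) (n : ℕ) :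
    ∑' r : ℤ, (cc Q r * z ^ r) * K Q 0 n r =
      rq Q (2 * n : ℕ) * (qPoch z Q n * qPoch (Q / z) Q n) := by
  induction n with
  | zero =>
    rw [tsum_eq_single 0]
    · simp [cc, K, rq_zero, qPoch]
    · intro r hr
      rw [K_zero, mul_zero]
      simp; omega
  | succ n ih =>
    have hpt : ∀ r : ℤ, (1 - Q ^ (2 * n + 1)) * (1 - Q ^ (2 * n + 2)) *
        ((cc Q r * z ^ r) * K Q 0 (n + 1 : ℕ) r) =
        (1 + Q ^ (2 * n + 1)) * ((cc Q r * z ^ r) * K Q 0 n r) -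
        z * Q ^ n * ((cc Q (r - 1) * z ^ (r - 1)) * K Q 0 n (r - 1)) -
        Q ^ (n + 1) / z * ((cc Q (r + 1) * z ^ (r + 1)) * K Q 0 n (r + 1)) := by
      intro r
      have hr : Q ^ r ≠ 0 := zpow_ne_zero _ hQ
      have c1 : cc Q (r - 1) = - cc Q r * Q / Q ^ r := by
        have := cc_succ hQ (r - 1)
        rw [sub_add_cancel, zpow_sub₀ hQ, zpow_one] at this
        rw [this]; field_simp
      have z1 : z ^ (r - 1) = z ^ r / z := by rw [zpow_sub₀ hz, zpow_one]
      have z2 : z ^ (r + 1) = z ^ r * z := by rw [zpow_add₀ hz, zpow_one]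
      have k1 : rq Q ((n : ℤ) - r) = (1 - Q ^ (n + 1) / Q ^ r) * rq Q ((n + 1 : ℕ) - r) := by
        have := rq_step h1 ((n + 1 : ℕ) - r)
        rw [zpow_sub₀ hQ, zpow_natCast] at this
        rw [this]; congr 1; push_cast; ring
      have k2 : rq Q ((n : ℤ) + r) = (1 - Q ^ (n + 1) * Q ^ r) * rq Q ((n + 1 : ℕ) + r) := by
        have := rq_step h1 ((n + 1 : ℕ) + r)
        rw [zpow_add₀ hQ, zpow_natCast] at this
        rw [this]; congr 1; push_cast; ring
      have k3 : rq Q ((n : ℤ) - r - 1) = (1 - Q ^ n / Q ^ r) * rq Q ((n : ℤ) - r) := by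
        have := rq_step h1 (n - r)
        rw [zpow_sub₀ hQ, zpow_natCast] at this
        rw [this]
      have k4 : rq Q ((n : ℤ) + r - 1) = (1 - Q ^ n * Q ^ r) * rq Q ((n : ℤ) + r) := by
        have := rq_step h1 (n + r)
        rw [zpow_add₀ hQ, zpow_natCast] at this
        rw [this]
      rw [cc_succ hQ, c1, z1, z2]
      unfold K
      rw [show (n : ℤ) - (r - 1) = (n + 1 : ℕ) - r by push_cast; ring,
        show (n : ℤ) - (r + 1) = n - r - 1 by ring,
        show (n : ℤ) + (r - 1) + 0 = n + r - 1 by ring,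
        show (n : ℤ) + (r + 1) + 0 = (n + 1 : ℕ) + r by push_cast; ring, add_zero, add_zero,
        k3, k4, k1, k2]
      generalize rq Q ((n + 1 : ℕ) - r) = a
      generalize rq Q ((n + 1 : ℕ) + r) = b
      generalize cc Q r = c
      have e1 : Q ^ (2 * n + 1) = Q * (Q ^ n) ^ 2 := by ring
      have e2 : Q ^ (2 * n + 2) = Q ^ 2 * (Q ^ n) ^ 2 := by ring
      have e3 : Q ^ (n + 1) = Q * Q ^ n := by ring
      rw [e1, e2, e3]
      generalize Q ^ r = x at *
      generalize z ^ r = w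
      generalize Q ^ n = y
      field_simp
      ring
    have s1 : ∑' r : ℤ, (cc Q (r - 1) * z ^ (r - 1)) * K Q 0 n (r - 1) =
        ∑' r : ℤ, (cc Q r * z ^ r) * K Q 0 n r :=
      Equiv.tsum_eq (Equiv.subRight (1 : ℤ)) (fun r => (cc Q r * z ^ r) * K Q 0 n r)
    have s2 : ∑' r : ℤ, (cc Q (r + 1) * z ^ (r + 1)) * K Q 0 n (r + 1) =
        ∑' r : ℤ, (cc Q r * z ^ r) * K Q 0 n r :=
      Equiv.tsum_eq (Equiv.addRight (1 : ℤ)) (fun r => (cc Q r * z ^ r) * K Q 0 n r)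
    have f0 := fin_supp Q 0 n (fun r => cc Q r * z ^ r)
    have f1 : Summable fun r : ℤ => (cc Q (r - 1) * z ^ (r - 1)) * K Q 0 n (r - 1) :=
      f0.comp_injective (i := fun r : ℤ => r - 1) (sub_left_injective)
    have f2 : Summable fun r : ℤ => (cc Q (r + 1) * z ^ (r + 1)) * K Q 0 n (r + 1) :=
      f0.comp_injective (i := fun r : ℤ => r + 1) (add_left_injective 1)
    have hs := tsum_congr (L := SummationFilter.unconditional ℤ) hpt
    rw [tsum_mul_left, Summable.tsum_sub ((f0.mul_left _).sub (f1.mul_left _)) (f2.mul_left _),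
      Summable.tsum_sub (f0.mul_left _) (f1.mul_left _), tsum_mul_left, tsum_mul_left,
      tsum_mul_left, s1, s2, ih] at hs
    have n1 := one_sub_pow_ne h1 (2 * n)
    have n2 := one_sub_pow_ne h1 (2 * n + 1)
    apply mul_left_cancel₀ (mul_ne_zero n1 n2)
    rw [show 2 * n + 1 + 1 = 2 * n + 2 by ring, hs]
    rw [rq_nat, rq_nat, show 2 * (n + 1) = 2 * n + 1 + 1 by ring, qPoch_succ, qPoch_succ]
    rw [show qPoch z Q (n + 1) = qPoch z Q n * (1 - z * Q ^ n) from Finset.prod_range_succ _ _,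
     show qPoch (Q / z) Q (n + 1) = qPoch (Q / z) Q n * (1 - Q / z * Q ^ n) from
      Finset.prod_range_succ _ _]
    have := qPoch_ne h1 (2 * n)
    have n2' : 1 - Q ^ (2 * n + 2) ≠ 0 := n2
    rw [show 2 * n + 1 + 1 = 2 * n + 2 by ring]
    field_simp
    ring

/-- Jacobi triple product. -/
lemma jtp {Q z : ℂ} (hQ : Q ≠ 0) (h1 : ‖Q‖ < 1) (hz : z ≠ 0)
    (hs : Summable (fun r : ℤ => ‖cc Q r * z ^ r‖)) :
    ∑' r : ℤ, cc Q r * z ^ r = qPochInf Q Q * (qPochInf z Q * qPochInf (Q / z) Q) := by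
  have a := K_sum_tendsto h1 _ hs
  simp only [jtp_fin hQ h1 hz] at a
  have h2 : Tendsto (fun n : ℕ => 2 * n) atTop atTop :=
    tendsto_id.const_mul_atTop' (by norm_num)
  have b := ((rq_tendsto h1).comp h2).mul ((qPoch_tendsto z h1).mul (qPoch_tendsto (Q / z) h1))
  have := tendsto_nhds_unique a b
  have hne := qPochInf_ne h1
  field_simp at this
  rw [this]; ring

/-- Indicator of the `i` innermost steps. -/
def eps (i j : ℕ) : ℕ := if j < i then 1 else 0

lemma eps_le (i j : ℕ) : eps i j ≤ 1 := by unfold eps; split_ifs <;> simp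

/-- The iterated sums. -/
noncomputable def B (q : ℂ) (i : ℕ) : ℕ → ℕ → ℂ
  | 0, n => rq q n
  | j + 1, n => ∑ s ∈ Finset.range (n + 1),
      q ^ ((s : ℤ) ^ 2 + eps i j * s) * rq q ((n : ℤ) - s) * B q i j s

lemma B_low {q : ℂ} (hq : q ≠ 0) (h1 : ‖q‖ < 1) (i j : ℕ) (hj : j ≤ i) : ∀ n : ℕ,
    B q i j n = ∑' r : ℤ, (cc q r * q ^ (((j + 1 : ℕ) : ℤ) * (r ^ 2 + r))) * K q (1 : ℕ) n r := by
  induction j with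
  | zero =>
    intro n
    have h : ∀ n : ℕ, (if n = 0 then 1 else 0 : ℂ) = ∑' r : ℤ, cc q r * K q (1 : ℕ) n r := by
      intro n
      have := switch hq h1 0 n
      simp only [Nat.cast_zero, zero_mul, zpow_zero, mul_one] at this
      rw [delta hq h1, ← this]
      simp
    have := chain hq h1 1 le_rfl _ _ h n
    rw [Finset.sum_range_succ'] at this
    simp only [B]
    simp at this
    simp [this]
  | succ j ih =>
    intro n
    have := chain hq h1 1 le_rfl _ _ (ih (by omega)) n
    rw [B]
    have he : eps i j = 1 := by simp [eps]; omega
    rw [he, this]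
    congr 1
    ext r
    rw [mul_assoc (cc q r), ← zpow_add₀ hq]
    congr 3
    push_cast; ring

lemma B_high {q : ℂ} (hq : q ≠ 0) (h1 : ‖q‖ < 1) (i l : ℕ) : ∀ n : ℕ,
    B q i (i + l) n = ∑' r : ℤ, (cc q r * q ^ (((i + 1 : ℕ) : ℤ) * (r ^ 2 + r) + l * r ^ 2)) *
      K q (0 : ℕ) n r := by
  induction l with
  | zero =>
    intro n
    have := switch hq h1 (i + 1) n
    rw [add_zero, B_low hq h1 i i le_rfl]
    simpa using this
  | succ l ih =>
    intro n
    have := chain hq h1 0 (by norm_num) _ _ ih n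
    rw [← add_assoc, B]
    have he : eps i (i + l) = 0 := by simp [eps]
    rw [he, this]
    congr 1
    ext r
    rw [mul_assoc (cc q r), ← zpow_add₀ hq]
    congr 3
    push_cast; ring

lemma w_bound {q : ℂ} (h1 : ‖q‖ < 1) (e s : ℕ) : ‖q ^ ((s : ℤ) ^ 2 + e * s)‖ ≤ ‖q‖ ^ s := by
  have : ((s : ℤ) ^ 2 + e * s) = ((s ^ 2 + e * s : ℕ) : ℤ) := by push_cast; ring
  rw [this, zpow_natCast, norm_pow]
  apply pow_le_pow_of_le_one (norm_nonneg _) h1.le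
  nlinarith [Nat.zero_le (e * s), Nat.le_self_pow (two_ne_zero) s]

lemma B_bdd {q : ℂ} (h1 : ‖q‖ < 1) (i j : ℕ) : ∃ M : ℝ, 0 ≤ M ∧ ∀ n, ‖B q i j n‖ ≤ M := by
  obtain ⟨C, hC0, hC⟩ := rq_bdd h1
  induction j with
  | zero => exact ⟨C, hC0, fun n => by rw [B]; apply hC⟩
  | succ j ih =>
    obtain ⟨M, hM0, hM⟩ := ih
    have hg := summable_geometric_of_lt_one (norm_nonneg q) h1
    refine ⟨(∑' s : ℕ, ‖q‖ ^ s) * (C * M), by positivity, fun n => ?_⟩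
    rw [B]
    refine (norm_sum_le _ _).trans ?_
    refine le_trans ?_ (mul_le_mul_of_nonneg_right
      (hg.sum_le_tsum (Finset.range (n + 1)) (fun _ _ => by positivity)) (by positivity))
    rw [Finset.sum_mul]
    apply Finset.sum_le_sum
    intro s _
    rw [norm_mul, norm_mul, mul_assoc]
    gcongr
    · apply w_bound h1
    · apply hC
    · apply hM

lemma S_tendsto {q : ℂ} (h1 : ‖q‖ < 1) (i d : ℕ) :
    Tendsto (fun n => B q i (d + 1) n) atTop
      (𝓝 ((qPochInf q q)⁻¹ * ∑' s : ℕ, q ^ ((s : ℤ) ^ 2 + eps i d * s) * B q i d s)) := by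
  obtain ⟨C, hC0, hC⟩ := rq_bdd h1
  obtain ⟨M, hM0, hM⟩ := B_bdd h1 i d
  have : ∀ n, B q i (d + 1) n =
      ∑' s : ℕ, rq q ((n : ℤ) - s) * (q ^ ((s : ℤ) ^ 2 + eps i d * s) * B q i d s) := by
    intro n
    rw [B, tsum_eq_sum (s := Finset.range (n + 1))]
    · apply Finset.sum_congr rfl
      intros; ring
    · intro s hs
      rw [Finset.mem_range] at hs
      rw [rq_neg q (by omega), zero_mul]
  simp_rw [this]
  rw [← tsum_mul_left]
  apply tendsto_tsum_of_dominated_convergence (bound := fun s => C * (‖q‖ ^ s * M))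
  · exact ((summable_geometric_of_lt_one (norm_nonneg q) h1).mul_right _).mul_left _
  · intro s
    exact (rq_tendsto_shift h1 (-s)).mul_const _
  · refine Eventually.of_forall fun n s => ?_
    rw [norm_mul, norm_mul]
    gcongr
    · apply hC
    · apply w_bound h1
    · apply hM

lemma summable_zabs {x : ℝ} (h0 : 0 ≤ x) (h1 : x < 1) : Summable (fun r : ℤ => x ^ r.natAbs) := by
  have hg := summable_geometric_of_lt_one h0 h1
  apply Summable.of_nat_of_neg
  · simpa using hg
  · simpa using hg

lemma S_eq {q : ℂ} (hq : q ≠ 0) (h1 : ‖q‖ < 1) (i d : ℕ) (hi : i ≤ d + 1) :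
    ∑' s : ℕ, q ^ ((s : ℤ) ^ 2 + eps i d * s) * B q i d s =
      qPochInf (q ^ (2 * (d + 2) + 1)) (q ^ (2 * (d + 2) + 1)) *
        qPochInf (q ^ (d + 2 - i)) (q ^ (2 * (d + 2) + 1)) *
        qPochInf (q ^ (d + 2 + i + 1)) (q ^ (2 * (d + 2) + 1)) / qPochInf q q := by
  obtain ⟨l, hl⟩ := Nat.exists_eq_add_of_le hi
  have hd : (d : ℤ) = i + l - 1 := by omega
  have hE : ∀ r : ℤ, cc q r * q ^ (((i + 1 : ℕ) : ℤ) * (r ^ 2 + r) + l * r ^ 2) =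
      cc (q ^ (2 * (d + 2) + 1)) r * (q ^ (d + 2 + i + 1)) ^ r := by
    intro r
    unfold cc
    rw [mul_assoc, mul_assoc, ← zpow_natCast q, ← zpow_natCast q, ← zpow_mul, ← zpow_mul,
      ← zpow_add₀ hq, ← zpow_add₀ hq]
    congr 2
    have := tri r
    push_cast
    rw [hd]
    generalize r * (r - 1) / 2 = t at *
    have ht : r ^ 2 = 2 * t + r := by linarith
    rw [ht]
    ring
  have hsum : Summable (fun r : ℤ =>
      ‖cc q r * q ^ (((i + 1 : ℕ) : ℤ) * (r ^ 2 + r) + l * r ^ 2)‖) := by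
    refine Summable.of_nonneg_of_le (fun _ => norm_nonneg _) (fun r => ?_)
      (summable_zabs (norm_nonneg q) h1)
    have ht := tri r
    have hle : (r.natAbs : ℤ) ≤ r * (r - 1) / 2 +
        (((i + 1 : ℕ) : ℤ) * (r ^ 2 + r) + l * r ^ 2) := by
      have hA : 0 ≤ (i : ℤ) * (r ^ 2 + r) := by
        apply mul_nonneg (by positivity)
        rcases le_or_gt 0 r with h | h <;> nlinarith
      have hB : 0 ≤ (l : ℤ) * r ^ 2 := by positivity
      have hC : 2 * |r| ≤ 3 * r ^ 2 + r := by
        rcases le_or_gt 0 r with h | h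
        · rw [abs_of_nonneg h]
          rcases h.eq_or_lt with h | h
          · subst h; simp
          · nlinarith
        · rw [abs_of_neg h]; nlinarith
      rw [Int.natCast_natAbs]
      push_cast
      nlinarith
    obtain ⟨E, hEE⟩ := Int.eq_ofNat_of_zero_le (le_trans (Int.natCast_nonneg _) hle)
    unfold cc
    rw [mul_assoc, ← zpow_add₀ hq, hEE, norm_mul, zpow_natCast, norm_pow]
    have : ‖(-1 : ℂ) ^ r‖ = 1 := by rw [norm_zpow]; simp
    rw [this, one_mul]
    apply pow_le_pow_of_le_one (norm_nonneg _) h1.le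
    rw [hEE] at hle
    exact_mod_cast hle
  have hQ : q ^ (2 * (d + 2) + 1) ≠ 0 := pow_ne_zero _ hq
  have hz : q ^ (d + 2 + i + 1) ≠ 0 := pow_ne_zero _ hq
  have hQ1 : ‖q ^ (2 * (d + 2) + 1)‖ < 1 := by
    rw [norm_pow]; exact pow_lt_one₀ (norm_nonneg _) h1 (by omega)
  have a := K_sum_tendsto h1 _ hsum
  have hB := B_high hq h1 i l
  rw [← hl] at hB
  simp only [Nat.cast_zero] at hB
  have b := S_tendsto h1 i d
  simp only [hB] at b
  have := tendsto_nhds_unique a b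
  have hs2 := hsum
  simp only [hE] at this hs2
  rw [jtp hQ hQ1 hz hs2] at this
  have hdiv : q ^ (2 * (d + 2) + 1) / q ^ (d + 2 + i + 1) = q ^ (d + 2 - i) := by
    rw [div_eq_iff hz, ← pow_add]; congr 1; omega
  rw [hdiv] at this
  have hne := qPochInf_ne h1
  rw [eq_div_iff hne]
  field_simp at this
  linear_combination -this

/-- Extension by zero of a finite tuple. -/
def ext0 {d : ℕ} (s : Fin d → ℕ) : ℕ → ℕ := fun m => if h : m < d then s ⟨m, h⟩ else 0

/-- The summand. -/
noncomputable def W (q : ℂ) (i d : ℕ) (t : ℕ → ℕ) : ℂ :=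
  q ^ (∑ m ∈ Finset.range d, (t m) ^ 2 + ∑ m ∈ Finset.range d, eps i (d - 1 - m) * t m) *
    ∏ m ∈ Finset.range d, rq q ((t m : ℤ) - t (m + 1))

lemma ext0_cons_zero {d : ℕ} (a : ℕ) (s : Fin d → ℕ) :
    ext0 (Fin.cons a s : Fin (d + 1) → ℕ) 0 = a := by
  simp only [ext0, Nat.succ_pos, dif_pos]
  rfl

lemma ext0_cons_succ {d : ℕ} (a : ℕ) (s : Fin d → ℕ) (m : ℕ) :
    ext0 (Fin.cons a s : Fin (d + 1) → ℕ) (m + 1) = ext0 s m := by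
  simp only [ext0, Nat.add_lt_add_iff_right]
  split_ifs <;> rfl

lemma W_cons (q : ℂ) (i d a : ℕ) (s : Fin d → ℕ) :
    W q i (d + 1) (ext0 (Fin.cons a s : Fin (d + 1) → ℕ)) =
      q ^ ((a : ℤ) ^ 2 + eps i d * a) * (rq q ((a : ℤ) - ext0 s 0) * W q i d (ext0 s)) := by
  have e0 : q ^ ((a : ℤ) ^ 2 + eps i d * a) = q ^ (a ^ 2 + eps i d * a) := by
    rw [← zpow_natCast]; push_cast; rfl
  rw [e0]
  unfold W
  rw [Finset.prod_range_succ', Finset.sum_range_succ', Finset.sum_range_succ']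
  simp only [ext0_cons_zero, ext0_cons_succ]
  have e1 : ∀ m ∈ Finset.range d, eps i (d + 1 - 1 - (m + 1)) * ext0 s m =
      eps i (d - 1 - m) * ext0 s m := by
    intro m _
    congr 2
    omega
  rw [Finset.sum_congr rfl e1, show d + 1 - 1 - 0 = d by omega]
  simp only [pow_add]
  ring

lemma summable_tuple {x : ℝ} (h0 : 0 ≤ x) (h1 : x < 1) (d : ℕ) :
    Summable (fun s : Fin d → ℕ => ∏ m, x ^ s m) := by
  induction d with
  | zero => exact (hasSum_fintype _).summable
  | succ d ih =>
    rw [← (Fin.consEquiv (fun _ : Fin (d + 1) => ℕ)).summable_iff]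
    have := Summable.mul_of_nonneg (summable_geometric_of_lt_one h0 h1) ih
      (fun _ => pow_nonneg h0 _) (fun _ => Finset.prod_nonneg fun _ _ => pow_nonneg h0 _)
    refine this.congr ?_
    rintro ⟨a, s⟩
    simp [Fin.consEquiv, Fin.prod_univ_succ]

lemma W_bound {q : ℂ} (h1 : ‖q‖ < 1) {C : ℝ} (hC : ∀ m, ‖rq q m‖ ≤ C) (i d : ℕ)
    (s : Fin d → ℕ) : ‖W q i d (ext0 s)‖ ≤ (∏ m, ‖q‖ ^ s m) * C ^ d := by
  unfold W
  rw [norm_mul]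
  apply mul_le_mul
  · rw [norm_pow, Finset.prod_pow_eq_pow_sum]
    apply pow_le_pow_of_le_one (norm_nonneg _) h1.le
    refine le_trans ?_ (Nat.le_add_right _ _)
    rw [Finset.sum_range]
    apply Finset.sum_le_sum
    intro m _
    have : ext0 s m = s m := by simp [ext0]
    rw [this]
    exact Nat.le_self_pow two_ne_zero _
  · rw [norm_prod]
    refine (Finset.prod_le_prod (fun _ _ => norm_nonneg _) (fun m _ => hC _)).trans ?_
    simp
  · exact norm_nonneg _
  · exact Finset.prod_nonneg fun _ _ => pow_nonneg (norm_nonneg _) _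

lemma W_summable {q : ℂ} (h1 : ‖q‖ < 1) (i d : ℕ) :
    Summable (fun s : Fin d → ℕ => W q i d (ext0 s)) := by
  obtain ⟨C, hC0, hC⟩ := rq_bdd h1
  exact Summable.of_norm_bounded ((summable_tuple (norm_nonneg q) h1 d).mul_right (C ^ d))
    (W_bound h1 hC i d)

lemma rW_summable {q : ℂ} (h1 : ‖q‖ < 1) (i d : ℕ) (n : ℤ) :
    Summable (fun s : Fin d → ℕ => rq q (n - ext0 s 0) * W q i d (ext0 s)) := by
  obtain ⟨C, hC0, hC⟩ := rq_bdd h1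
  refine Summable.of_norm_bounded
    (((summable_tuple (norm_nonneg q) h1 d).mul_right (C ^ d)).mul_left C) (fun s => ?_)
  rw [norm_mul]
  exact mul_le_mul (hC _) (W_bound h1 hC i d s) (norm_nonneg _) hC0

lemma W_tsum {q : ℂ} (hq : q ≠ 0) (h1 : ‖q‖ < 1) (i d : ℕ) : ∀ n : ℕ,
    ∑' s : Fin d → ℕ, rq q ((n : ℤ) - ext0 s 0) * W q i d (ext0 s) = B q i d n := by
  induction d with
  | zero =>
    intro n
    rw [tsum_eq_single default (fun s hs => absurd (Subsingleton.elim s _) hs)]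
    simp [B, W, ext0]
  | succ d ih =>
    intro n
    have hsum := rW_summable h1 i (d + 1) n
    rw [← (Fin.consEquiv (fun _ : Fin (d + 1) => ℕ)).summable_iff] at hsum
    simp only [Function.comp_def] at hsum
    rw [← (Fin.consEquiv (fun _ : Fin (d + 1) => ℕ)).tsum_eq, Summable.tsum_prod hsum]
    simp only [Fin.consEquiv, Equiv.coe_fn_mk, ext0_cons_zero, W_cons q, tsum_mul_left, ih]
    rw [B, tsum_eq_sum (s := Finset.range (n + 1))]
    · apply Finset.sum_congr rfl
      intros; ring
    · intro s hs
      rw [Finset.mem_range] at hs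
      rw [rq_neg q (by omega), zero_mul]

lemma W_tsum' {q : ℂ} (hq : q ≠ 0) (h1 : ‖q‖ < 1) (i d : ℕ) :
    ∑' s : Fin (d + 1) → ℕ, W q i (d + 1) (ext0 s) =
      ∑' s : ℕ, q ^ ((s : ℤ) ^ 2 + eps i d * s) * B q i d s := by
  have hsum := W_summable h1 i (d + 1)
  rw [← (Fin.consEquiv (fun _ : Fin (d + 1) => ℕ)).summable_iff] at hsum
  simp only [Function.comp_def] at hsum
  rw [← (Fin.consEquiv (fun _ : Fin (d + 1) => ℕ)).tsum_eq, Summable.tsum_prod hsum]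
  simp only [Fin.consEquiv, Equiv.coe_fn_mk, W_cons q, tsum_mul_left, W_tsum hq h1]

lemma W_support (q : ℂ) (i d : ℕ) (s : Fin d → ℕ) (h : W q i d (ext0 s) ≠ 0) : Antitone s := by
  have hstep : ∀ m, ext0 s (m + 1) ≤ ext0 s m := by
    intro m
    by_cases hm : m < d
    · by_contra hc
      apply h
      unfold W
      rw [Finset.prod_eq_zero (Finset.mem_range.mpr hm), mul_zero]
      exact rq_neg q (by omega)
    · have : ext0 s (m + 1) = 0 := by simp only [ext0]; rw [dif_neg (by omega)]
      omega
  have ha := antitone_nat_of_succ_le hstep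
  intro a b hab
  have := ha (show (a : ℕ) ≤ b from hab)
  simpa [ext0] using this

lemma W_antitone (q : ℂ) (i d : ℕ) (hi : i ≤ d) (s : Fin d → ℕ) (h : Antitone s) :
    W q i d (ext0 s) = q ^ (∑ m ∈ Finset.range d, (ext0 s m) ^ 2 +
      ∑ m ∈ Finset.Ico (d - i) d, ext0 s m) /
         ∏ m ∈ Finset.range d, qPoch q q (ext0 s m - ext0 s (m + 1)) := by
  unfold W
  rw [div_eq_mul_inv, ← Finset.prod_inv_distrib]
  congr 1
  · congr 2
    rw [Finset.range_eq_Ico, ← Finset.sum_Ico_consecutive _ (Nat.zero_le (d - i)) (Nat.sub_le d i),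
      Finset.sum_eq_zero, zero_add]
    · apply Finset.sum_congr rfl
      intro m hm
      rw [Finset.mem_Ico] at hm
      rw [eps, if_pos (by omega), one_mul]
    · intro m hm
      rw [Finset.mem_Ico] at hm
      rw [eps, if_neg (by omega), zero_mul]
  · apply Finset.prod_congr rfl
    intro m hm
    rw [Finset.mem_range] at hm
    have hle : ext0 s (m + 1) ≤ ext0 s m := by
      simp only [ext0, hm, dif_pos]
      split_ifs with h2
      · exact h (by simp)
      · exact Nat.zero_le _
    rw [← Nat.cast_sub hle, rq_nat]

lemma final {q : ℂ} (hq : q ≠ 0) (h1 : ‖q‖ < 1) (i d : ℕ) (hi : i ≤ d + 1) :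
    ∑' s : {s : Fin (d + 1) → ℕ // Antitone s},
      q ^ (∑ m ∈ Finset.range (d + 1), (ext0 s.1 m) ^ 2 +
        ∑ m ∈ Finset.Ico (d + 1 - i) (d + 1), ext0 s.1 m) /
         ∏ m ∈ Finset.range (d + 1), qPoch q q (ext0 s.1 m - ext0 s.1 (m + 1)) =
      qPochInf (q ^ (2 * (d + 2) + 1)) (q ^ (2 * (d + 2) + 1)) *
        qPochInf (q ^ (d + 2 - i)) (q ^ (2 * (d + 2) + 1)) *
        qPochInf (q ^ (d + 2 + i + 1)) (q ^ (2 * (d + 2) + 1)) / qPochInf q q := by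
  rw [← S_eq hq h1 i d hi, ← W_tsum' hq h1,
    ← tsum_subtype_eq_of_support_subset (s := {s : Fin (d + 1) → ℕ | Antitone s})
      (fun s hs => W_support q i (d + 1) s hs)]
  exact tsum_congr fun s => (W_antitone q i (d + 1) hi s.1 s.2).symm

end AG

/-- The Andrews–Gordon identities.  The tuple `s` encodes `s_1 ≥ s_2 ≥ ⋯ ≥ s_{k-1} ≥ 0`
via `s_m = t (m-1)`, with the convention `s_k = 0`. -/
theorem andrews_gordon (q : ℂ) (h0 : 0 < ‖q‖) (h1 : ‖q‖ < 1)
    (k i : ℕ) (hk : 2 ≤ k) (hi : i ≤ k - 1) :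
    (∑' s : {s : Fin (k - 1) → ℕ // Antitone s},
      (let t : ℕ → ℕ := fun m => if h : m < k - 1 then s.1 ⟨m, h⟩ else 0
       q ^ (∑ m ∈ Finset.range (k - 1), (t m) ^ 2 + ∑ m ∈ Finset.Ico (k - 1 - i) (k - 1), t m) /
         ∏ m ∈ Finset.range (k - 1), qPoch q q (t m - t (m + 1)))) =
      qPochInf (q ^ (2 * k + 1)) (q ^ (2 * k + 1)) * qPochInf (q ^ (k - i)) (q ^ (2 * k + 1)) *
        qPochInf (q ^ (k + i + 1)) (q ^ (2 * k + 1)) / qPochInf q q := by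
  obtain ⟨d, rfl⟩ := Nat.exists_eq_add_of_le' hk
  have hq : q ≠ 0 := norm_pos_iff.mp h0
  exact AG.final hq h1 i d hi
end
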